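/- arXiv:0902.3958 — 10 statements merged into one kernel-verified Lean document; each statement's English description precedes it below -/
import Mathlib

section
/- For every nondeterministic Büchi automaton A = ⟨L, ι, Σ, δ, α⟩ and all even numbers k', k with 0 ≤ k' ≤ k, L(KV(A, k')) ⊆ L(KV(A, k)); moreover, for k = 2(|L| − |α|), L(KV(A, k)) = Σ^ω \ L(A). -/
/-!
Following Kupferman and Vardi, the ABW `KV M k` guesses an odd ranking of the run DAG of `M` on the
input: natural numbers on the nodes that do not increase along edges, are even at accepting nodes,
and are odd infinitely often on every infinite path. For even `k`, a word lies in the language of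
`KV M k` iff its run DAG has an odd ranking with value at most `k` at the root. To pass from a run
of `KV M k` to a ranking, give each node of the DAG the least rank with which the run visits it.

Along an infinite path an odd ranking is eventually constant and odd, so no path visits accepting
nodes infinitely often. Conversely, suppose that there is no such path. Give rank `0` to the nodes
that start no infinite path, rank `1` to the remaining ones that can no longer reach an accepting
node, and rank what is left recursively, adding `2`. If infinite paths exist, then one of them has
only nodes of rank `1` (otherwise, always moving towards the closest accepting node would give a
path with infinitely many accepting nodes), so this round removes a non-accepting node from all
sufficiently high levels. Hence there are at most `|L| - |α|` rounds.
-/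

/-- A nondeterministic Büchi automaton (NBW) over states `Q` and alphabet `A`:
an initial state, a transition function `δ : Q × A → 2^Q` and accepting states. -/
structure NBW (Q : Type*) (A : Type*) where
  init : Q
  delta : Q → A → Set Q
  acc : Set Q

namespace NBW

variable {Q A : Type*}

/-- A run of an NBW on the infinite word `w`. -/
def IsRun (M : NBW Q A) (w : ℕ → A) (ρ : ℕ → Q) : Prop :=
  ρ 0 = M.init ∧ ∀ i, ρ (i + 1) ∈ M.delta (ρ i) (w i)

/-- The language of an NBW: words having a run visiting accepting states infinitely often. -/
def Lang (M : NBW Q A) : Set (ℕ → A) :=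
  {w | ∃ ρ, M.IsRun w ρ ∧ ∀ n, ∃ i ≥ n, ρ i ∈ M.acc}

/-- `Pre_σ(S)`: the σ-predecessors of the set `S`. -/
def PreSigma (M : NBW Q A) (σ : A) (S : Set Q) : Set Q :=
  {l | ∃ l' ∈ S, l' ∈ M.delta l σ}

/-- `Pre(S) = ⋃_σ Pre_σ(S)`. -/
def Pre (M : NBW Q A) (S : Set Q) : Set Q :=
  {l | ∃ σ, ∃ l' ∈ S, l' ∈ M.delta l σ}

/-- A pre-order `r` is a simulation for the NBW `M`. -/
def Simulation (M : NBW Q A) (r : Q → Q → Prop) : Prop :=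
  (∀ l1 l2 l3 σ, r l3 l1 → l2 ∈ M.delta l1 σ →
      ∃ l4, r l4 l2 ∧ l4 ∈ M.delta l3 σ) ∧
  (∀ l ∈ M.acc, ∀ l', r l' l → l' ∈ M.acc)

end NBW

/-- A set `S` is `r`-(downward-)closed. -/
def RClosed {Q : Type*} (r : Q → Q → Prop) (S : Set Q) : Prop :=
  ∀ l1 l2, r l1 l2 → l2 ∈ S → l1 ∈ S
/-- Positive boolean formulas over `Q`, built from `Q ∪ {true, false}` with `∧`, `∨`. -/
inductive PosBool (Q : Type*) where
  | tru : PosBool Q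
  | fls : PosBool Q
  | var (q : Q) : PosBool Q
  | and (φ ψ : PosBool Q) : PosBool Q
  | or (φ ψ : PosBool Q) : PosBool Q

/-- `X ⊨ φ`: the assignment making exactly the members of `X` true satisfies `φ`. -/
def PosBool.Sat {Q : Type*} (X : Set Q) : PosBool Q → Prop
  | .tru => True
  | .fls => False
  | .var q => q ∈ X
  | .and φ ψ => φ.Sat X ∧ ψ.Sat X
  | .or φ ψ => φ.Sat X ∨ ψ.Sat X

/-- An alternating Büchi automaton (ABW). -/
structure ABW (Q : Type*) (A : Type*) where
  init : Q
  delta : Q → A → PosBool Q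
  acc : Set Q

namespace ABW

variable {Q A : Type*}

/-- A run of an ABW on the word `w`: a DAG on `Q × ℕ` rooted at `(ι, 0)`; edges go from
level `i` to level `i+1`, and at every node of the run (reachable from the root) the set
of successors satisfies the transition formula. -/
def IsRun (M : ABW Q A) (w : ℕ → A) (E : Q × ℕ → Q × ℕ → Prop) : Prop :=
  (∀ p q, E p q → q.2 = p.2 + 1) ∧
  (∀ l i, Relation.ReflTransGen E (M.init, 0) (l, i) →
      PosBool.Sat {l' | E (l, i) (l', i + 1)} (M.delta l (w i)))

/-- A run is accepting iff every infinite path from the root visits α-nodes infinitely often. -/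
def Accepting (M : ABW Q A) (w : ℕ → A) (E : Q × ℕ → Q × ℕ → Prop) : Prop :=
  ∀ π : ℕ → Q × ℕ, π 0 = (M.init, 0) → (∀ i, E (π i) (π (i + 1))) →
    ∀ n, ∃ i ≥ n, (π i).1 ∈ M.acc

/-- The language of an ABW. -/
def Lang (M : ABW Q A) : Set (ℕ → A) :=
  {w | ∃ E, M.IsRun w E ∧ M.Accepting w E}

end ABW

/-- Finite conjunction of formulas. -/
def bigAnd {β Q : Type*} (L : List β) (f : β → PosBool Q) : PosBool Q :=
  L.foldr (fun b acc => (f b).and acc) .tru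

/-- Finite disjunction of formulas. -/
def bigOr {β Q : Type*} (L : List β) (f : β → PosBool Q) : PosBool Q :=
  L.foldr (fun b acc => (f b).or acc) .fls

-- The Kupferman-Vardi construction `KV(M, k)`: an ABW over `L × [k]` with initial
-- state `(ι, k)`, accepting states `L × [k]^odd`, and
-- `δ'((l,i),σ) = false` if `l ∈ α` and `i` odd, and
-- `δ'((l,i),σ) = ⋀_{l' ∈ δ(l,σ)} ⋁_{i' ≤ i} (l',i')` otherwise.
open Classical in
noncomputable def KV {Q A : Type*} [Fintype Q] (M : NBW Q A) (k : ℕ) : ABW (Q × ℕ) A where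
  init := (M.init, k)
  delta := fun p σ =>
    if p.1 ∈ M.acc ∧ Odd p.2 then PosBool.fls
    else bigAnd ((M.delta p.1 σ).toFinite.toFinset.toList) fun l' =>
           bigOr (List.range (p.2 + 1)) fun i' => PosBool.var (l', i')
  acc := {p | Odd p.2 ∧ p.2 ≤ k}

open Filter

theorem frequently_atTop_add_nat_iff {p : ℕ → Prop} (k : ℕ) :
    (∃ᶠ n in atTop, p (n + k)) ↔ ∃ᶠ n in atTop, p n := by
  rw [← frequently_map (m := (· + k)), map_add_atTop_eq_nat]

theorem frequently_atTop_of_forall_or_lt {α : Type*} [Preorder α] [WellFoundedLT α]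
    {p : ℕ → Prop} {d : ℕ → α} (h : ∀ n, p n ∨ d (n + 1) < d n) : ∃ᶠ n in atTop, p n := by
  by_contra hp
  obtain ⟨N, hN⟩ := eventually_atTop.1 (not_frequently.1 hp)
  exact not_strictAnti_of_wellFoundedLT (fun n => d (N + n)) <| strictAnti_nat_of_succ_lt fun n =>
    (h (N + n)).resolve_left (hN _ (Nat.le_add_right N n))

section Graph

variable {V : Type*}

/-- The sequence `π` is an infinite path of the graph `step` that stays in `T`. -/
structure IsPathIn (step : V → V → Prop) (T : Set V) (π : ℕ → V) : Prop where
  mem : ∀ n, π n ∈ T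
  step : ∀ n, step (π n) (π (n + 1))

/-- Odd rankings in the sense of Kupferman and Vardi, for the subgraph of `step` induced on `T`:
the values of `f` outside `T` are irrelevant. -/
structure IsOddRanking (step : V → V → Prop) (acc T : Set V) (f : V → ℕ) : Prop where
  le_of_step : ∀ {u v}, u ∈ T → v ∈ T → step u v → f v ≤ f u
  notMem_of_odd : ∀ {v}, v ∈ T → Odd (f v) → v ∉ acc
  frequently_odd : ∀ {π}, IsPathIn step T π → ∃ᶠ n in atTop, Odd (f (π n))

/-- The nodes from which an infinite path inside `T` starts. -/
def infPart (step : V → V → Prop) (T : Set V) : Set V := {v | ∃ π, IsPathIn step T π ∧ π 0 = v}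

/-- The nodes from which a path inside `X` with exactly `n` edges leads to a node of `acc`. -/
def reachIn (step : V → V → Prop) (acc X : Set V) : ℕ → Set V
  | 0 => X ∩ acc
  | n + 1 => {v ∈ X | ∃ u ∈ reachIn step acc X n, step v u}

/-- The nodes that can reach `acc` by a finite path inside `X`. -/
def reachPart (step : V → V → Prop) (acc X : Set V) : Set V := {v | ∃ n, v ∈ reachIn step acc X n}

/-- The non-accepting nodes of `T` on a given level of a graph that is layered by `level`. -/
def nonaccSlice (acc : Set V) (level : V → ℕ) (T : Set V) (i : ℕ) : Set V :=
  {v ∈ T | v ∉ acc ∧ level v = i}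

variable {step : V → V → Prop} {acc T X : Set V} {π : ℕ → V} {u v : V}

theorem exists_isPathIn_of_forall_exists_step (h : ∀ u ∈ X, ∃ v ∈ X, step u v) (hu : u ∈ X) :
    ∃ π, IsPathIn step X π ∧ π 0 = u := by
  have : Nonempty V := ⟨u⟩
  choose! next hmem hstep using h
  have hiter (n : ℕ) : next^[n] u ∈ X := Set.MapsTo.iterate hmem n hu
  refine ⟨fun n => next^[n] u, ⟨hiter, fun n => ?_⟩, rfl⟩
  rw [Function.iterate_succ_apply']
  exact hstep _ (hiter n)

theorem exists_path_extending_of_reflTransGen (h : Relation.ReflTransGen step u (π 0))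
    (hπ : ∀ n, step (π n) (π (n + 1))) :
    ∃ ρ : ℕ → V, ρ 0 = u ∧ (∀ n, step (ρ n) (ρ (n + 1))) ∧ ∃ k, ∀ n, ρ (n + k) = π n := by
  induction h using Relation.ReflTransGen.head_induction_on with
  | refl => exact ⟨π, rfl, hπ, 0, fun n => rfl⟩
  | @head a b hab _ ih =>
    obtain ⟨ρ, hρ0, hρ, k, hk⟩ := ih
    refine ⟨fun n => n.casesOn a ρ, rfl, fun n => ?_, k + 1, hk⟩
    cases n with
    | zero => simpa [hρ0] using hab
    | succ n => exact hρ n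

namespace IsPathIn

theorem drop (hπ : IsPathIn step T π) (k : ℕ) : IsPathIn step T fun n => π (n + k) where
  mem n := hπ.mem (n + k)
  step n := by simpa only [Nat.add_right_comm] using hπ.step (n + k)

theorem mem_infPart (hπ : IsPathIn step T π) (n : ℕ) : π n ∈ infPart step T :=
  ⟨_, hπ.drop n, by simp⟩

theorem level_eq {level : V → ℕ} (hlevel : ∀ u v, step u v → level v = level u + 1)
    (hπ : IsPathIn step T π) (n : ℕ) : level (π n) = level (π 0) + n := by
  induction n with
  | zero => rfl
  | succ n ih => rw [hlevel _ _ (hπ.step n), ih, Nat.add_assoc]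

end IsPathIn

theorem infPart_subset : infPart step T ⊆ T := by
  rintro _ ⟨π, hπ, rfl⟩
  exact hπ.mem 0

theorem exists_step_of_mem_infPart (hv : v ∈ infPart step T) :
    ∃ v' ∈ infPart step T, step v v' := by
  obtain ⟨π, hπ, rfl⟩ := hv
  exact ⟨π 1, hπ.mem_infPart 1, hπ.step 0⟩

theorem mem_infPart_of_step (hu : u ∈ T) (hv : v ∈ infPart step T) (huv : step u v) :
    u ∈ infPart step T := by
  have hsucc : ∀ a ∈ insert u (infPart step T), ∃ b ∈ insert u (infPart step T), step a b := by
    rintro a (rfl | ha)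
    · exact ⟨v, .inr hv, huv⟩
    · obtain ⟨b, hb, hab⟩ := exists_step_of_mem_infPart ha
      exact ⟨b, .inr hb, hab⟩
  obtain ⟨π, hπ, hπ0⟩ := exists_isPathIn_of_forall_exists_step hsucc (Set.mem_insert u _)
  exact ⟨π, ⟨fun n => Set.insert_subset hu infPart_subset (hπ.mem n), hπ.step⟩, hπ0⟩

theorem reachPart_subset : reachPart step acc X ⊆ X := by
  rintro v ⟨_ | n, hv⟩ <;> exact hv.1

theorem inter_subset_reachPart : X ∩ acc ⊆ reachPart step acc X := fun _ hv => ⟨0, hv⟩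

theorem mem_reachPart_of_step (hu : u ∈ X) (hv : v ∈ reachPart step acc X) (huv : step u v) :
    u ∈ reachPart step acc X := by
  obtain ⟨n, hn⟩ := hv
  exact ⟨n + 1, hu, v, hn, huv⟩

theorem exists_distance_to_acc (step : V → V → Prop) (acc X : Set V) :
    ∃ d : V → ℕ, ∀ v ∈ reachPart step acc X,
      v ∈ acc ∨ ∃ u ∈ reachPart step acc X, step v u ∧ d u < d v := by
  let d (v : V) : ℕ := sInf {n | v ∈ reachIn step acc X n}
  refine ⟨d, fun v hv => ?_⟩
  have hmem : v ∈ reachIn step acc X (d v) := Nat.sInf_mem hv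
  rcases hd : d v with _ | m <;> rw [hd] at hmem
  · exact .inl hmem.2
  · obtain ⟨-, u, hu, hvu⟩ := hmem
    exact .inr ⟨u, ⟨m, hu⟩, hvu, Nat.lt_succ_of_le (Nat.sInf_le hu)⟩

theorem exists_isPathIn_frequently_mem (hsucc : ∀ v ∈ X, ∃ v' ∈ X, step v v')
    (hreach : X ⊆ reachPart step acc X) (hX : X.Nonempty) :
    ∃ π, IsPathIn step X π ∧ ∃ᶠ n in atTop, π n ∈ acc := by
  obtain ⟨d, hd⟩ := exists_distance_to_acc step acc X
  have hprogress : ∀ v ∈ X, ∃ v' ∈ X, step v v' ∧ (v ∈ acc ∨ d v' < d v) := by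
    intro v hv
    rcases hd v (hreach hv) with hacc | ⟨u, hu, hvu, hlt⟩
    · obtain ⟨v', hv', hstep⟩ := hsucc v hv
      exact ⟨v', hv', hstep, .inl hacc⟩
    · exact ⟨u, reachPart_subset hu, hvu, .inr hlt⟩
  obtain ⟨v, hv⟩ := hX
  obtain ⟨π, hπ, -⟩ := exists_isPathIn_of_forall_exists_step hprogress hv
  exact ⟨π, ⟨hπ.mem, fun n => (hπ.step n).1⟩,
    frequently_atTop_of_forall_or_lt (d := d ∘ π) fun n => (hπ.step n).2⟩

theorem exists_isPathIn_infPart_diff_reachPart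
    (hT : ∀ π, IsPathIn step T π → ¬ ∃ᶠ n in atTop, π n ∈ acc)
    (hinf : (infPart step T).Nonempty) :
    ∃ π, IsPathIn step (infPart step T \ reachPart step acc (infPart step T)) π := by
  obtain ⟨v, hv, hvr⟩ : ∃ v ∈ infPart step T, v ∉ reachPart step acc (infPart step T) := by
    by_contra! hreach
    obtain ⟨π, hπ, hacc⟩ :=
      exists_isPathIn_frequently_mem (fun _ => exists_step_of_mem_infPart) hreach hinf
    exact hT π ⟨fun n => infPart_subset (hπ.mem n), hπ.step⟩ hacc
  have hsucc : ∀ a ∈ infPart step T \ reachPart step acc (infPart step T),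
      ∃ b ∈ infPart step T \ reachPart step acc (infPart step T), step a b := by
    rintro a ⟨ha, har⟩
    obtain ⟨b, hb, hab⟩ := exists_step_of_mem_infPart ha
    exact ⟨b, ⟨hb, fun hbr => har (mem_reachPart_of_step ha hbr hab)⟩, hab⟩
  obtain ⟨π, hπ, -⟩ := exists_isPathIn_of_forall_exists_step hsucc ⟨hv, hvr⟩
  exact ⟨π, hπ⟩

namespace IsOddRanking

variable {f g : V → ℕ}

theorem antitone_comp (hf : IsOddRanking step acc T f) (hπ : IsPathIn step T π) :
    Antitone (f ∘ π) :=
  antitone_nat_of_succ_le fun n => hf.le_of_step (hπ.mem n) (hπ.mem (n + 1)) (hπ.step n)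

theorem not_frequently_mem (hf : IsOddRanking step acc T f) (hπ : IsPathIn step T π) :
    ¬ ∃ᶠ n in atTop, π n ∈ acc := by
  obtain ⟨N, hN⟩ := WellFoundedLT.antitone_chain_condition (hf.antitone_comp hπ)
  obtain ⟨i, hi, hodd⟩ := frequently_atTop.1 (hf.frequently_odd hπ) N
  refine not_frequently.2 (eventually_atTop.2 ⟨N, fun j hj => hf.notMem_of_odd (hπ.mem j) ?_⟩)
  have hconst : f (π i) = f (π j) := (hN i hi).symm.trans (hN j hj)
  rwa [← hconst]

theorem le_of_reflTransGen {root : V}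
    (hf : IsOddRanking step acc {v | Relation.ReflTransGen step root v} f)
    (hv : Relation.ReflTransGen step root v) : f v ≤ f root := by
  induction hv with
  | refl => exact le_rfl
  | tail hu huv ih => exact (hf.le_of_step hu (hu.tail huv) huv).trans ih

theorem zero_of_infPart_eq_empty (h : infPart step T = ∅) : IsOddRanking step acc T 0 where
  le_of_step _ _ _ := le_rfl
  notMem_of_odd _ hodd := absurd hodd (by simp)
  frequently_odd hπ := absurd (hπ.mem_infPart 0) (by simp [h])

open Classical in
theorem of_reachPart (hg : IsOddRanking step acc (reachPart step acc (infPart step T)) g) :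
    IsOddRanking step acc T fun v =>
      if v ∈ reachPart step acc (infPart step T) then g v + 2
      else if v ∈ infPart step T then 1 else 0 where
  le_of_step {u v} hu _ huv := by
    by_cases hvi : v ∈ infPart step T
    · have hui : u ∈ infPart step T := mem_infPart_of_step hu hvi huv
      by_cases hvr : v ∈ reachPart step acc (infPart step T)
      · have hur := mem_reachPart_of_step hui hvr huv
        simpa [hvr, hur] using hg.le_of_step hur hvr huv
      · simp only [hvr, hvi, hui, if_true, if_false]
        split_ifs <;> omega
    · simp [hvi, mt (fun h => reachPart_subset h) hvi]
  notMem_of_odd {v} _ hodd := by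
    split_ifs at hodd with hvr hvi
    · exact hg.notMem_of_odd hvr (by simpa [Nat.odd_add] using hodd)
    · exact fun hacc => hvr (inter_subset_reachPart ⟨hvi, hacc⟩)
    · simp at hodd
  frequently_odd {π} hπ := by
    by_cases hall : ∀ n, π n ∈ reachPart step acc (infPart step T)
    · simpa [hall, Nat.odd_add] using hg.frequently_odd ⟨hall, hπ.step⟩
    · obtain ⟨N, hN⟩ := not_forall.1 hall
      have hleft : ∀ n ≥ N, π n ∉ reachPart step acc (infPart step T) := fun n hn =>
        Nat.le_induction hN
          (fun n _ ih hmem => ih (mem_reachPart_of_step (hπ.mem_infPart n) hmem (hπ.step n))) n hn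
      refine (eventually_atTop.2 ⟨N, fun n hn => ?_⟩).frequently
      simp [hleft n hn, hπ.mem_infPart n]

end IsOddRanking

variable {level : V → ℕ}

theorem encard_nonaccSlice_reachPart_add_one_le
    (hlevel : ∀ u v, step u v → level v = level u + 1)
    (hπ : IsPathIn step (infPart step T \ reachPart step acc (infPart step T)) π) :
    ∀ᶠ i in atTop, (nonaccSlice acc level (reachPart step acc (infPart step T)) i).encard + 1 ≤
      (nonaccSlice acc level T i).encard := by
  refine eventually_atTop.2 ⟨level (π 0), fun i hi => ?_⟩
  obtain ⟨n, rfl⟩ := Nat.exists_eq_add_of_le hi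
  obtain ⟨hinf, hreach⟩ := hπ.mem n
  have hacc : π n ∉ acc := fun h => hreach (inter_subset_reachPart ⟨hinf, h⟩)
  rw [← Set.encard_insert_of_notMem fun h => hreach h.1]
  exact Set.encard_le_encard <|
    Set.insert_subset ⟨infPart_subset hinf, hacc, hπ.level_eq hlevel n⟩ fun v hv =>
      ⟨infPart_subset (reachPart_subset hv.1), hv.2⟩

theorem exists_isOddRanking_le (hlevel : ∀ u v, step u v → level v = level u + 1) (n : ℕ)
    (hT : ∀ π, IsPathIn step T π → ¬ ∃ᶠ i in atTop, π i ∈ acc)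
    (hwidth : ∀ᶠ i in atTop, (nonaccSlice acc level T i).encard ≤ n) :
    ∃ f, IsOddRanking step acc T f ∧ ∀ v, f v ≤ 2 * n := by
  induction n generalizing T with
  | zero =>
    rcases (infPart step T).eq_empty_or_nonempty with hempty | hinf
    · exact ⟨0, .zero_of_infPart_eq_empty hempty, fun _ => le_rfl⟩
    · obtain ⟨π, hπ⟩ := exists_isPathIn_infPart_diff_reachPart hT hinf
      obtain ⟨i, hi, hi0⟩ :=
        ((encard_nonaccSlice_reachPart_add_one_le hlevel hπ).and hwidth).exists
      simpa using hi.trans hi0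
  | succ n ih =>
    rcases (infPart step T).eq_empty_or_nonempty with hempty | hinf
    · exact ⟨0, .zero_of_infPart_eq_empty hempty, fun _ => Nat.zero_le _⟩
    · obtain ⟨π, hπ⟩ := exists_isPathIn_infPart_diff_reachPart hT hinf
      obtain ⟨g, hg, hgn⟩ := ih (T := reachPart step acc (infPart step T))
        (fun ρ hρ => hT ρ ⟨fun i => infPart_subset (reachPart_subset (hρ.mem i)), hρ.step⟩) <| by
        filter_upwards [encard_nonaccSlice_reachPart_add_one_le hlevel hπ, hwidth] with i hi hin
        have hle := hi.trans hin
        push_cast at hle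
        exact (ENat.add_le_add_iff_right ENat.one_ne_top).1 hle
      refine ⟨_, hg.of_reachPart, fun v => ?_⟩
      have := hgn v
      split_ifs <;> omega

theorem encard_nonaccSlice_snd_le {Q : Type*} [Finite Q] (F : Set Q) (T : Set (Q × ℕ)) (i : ℕ) :
    (nonaccSlice (Prod.fst ⁻¹' F) Prod.snd T i).encard ≤ Fᶜ.ncard := by
  rw [Fᶜ.toFinite.cast_ncard_eq]
  refine Set.encard_le_encard_of_injOn (f := Prod.fst) (fun v hv => hv.2.1) ?_
  exact fun u hu v hv huv => Prod.ext huv (hu.2.2.trans hv.2.2.symm)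

end Graph

section Formulas

variable {β Q A : Type*}

theorem sat_bigAnd_iff (X : Set Q) (L : List β) (f : β → PosBool Q) :
    (bigAnd L f).Sat X ↔ ∀ b ∈ L, (f b).Sat X := by
  induction L with
  | nil => simp [bigAnd, PosBool.Sat]
  | cons a L ih =>
    rw [List.forall_mem_cons, ← ih]
    rfl

theorem sat_bigOr_iff (X : Set Q) (L : List β) (f : β → PosBool Q) :
    (bigOr L f).Sat X ↔ ∃ b ∈ L, (f b).Sat X := by
  induction L with
  | nil => simp [bigOr, PosBool.Sat]
  | cons a L ih =>
    simp only [List.mem_cons, exists_eq_or_imp, ← ih]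
    rfl

theorem sat_KV_delta_iff [Fintype Q] (M : NBW Q A) (k : ℕ) (X : Set (Q × ℕ)) (l : Q) (r : ℕ)
    (σ : A) :
    ((KV M k).delta (l, r) σ).Sat X ↔
      ¬ (l ∈ M.acc ∧ Odd r) ∧ ∀ l' ∈ M.delta l σ, ∃ r' ≤ r, (l', r') ∈ X := by
  by_cases h : l ∈ M.acc ∧ Odd r
  · simp [KV, h, PosBool.Sat]
  · simp only [KV, if_neg h, sat_bigAnd_iff, sat_bigOr_iff]
    simp [h, PosBool.Sat]

end Formulas

section RunDAG

variable {Q A : Type*} {M : NBW Q A} {w : ℕ → A}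

namespace NBW

/-- The edge relation of the run DAG of `M` on `w`, whose nodes are pairs of a state and a level. -/
def RunStep (M : NBW Q A) (w : ℕ → A) (u v : Q × ℕ) : Prop :=
  v.2 = u.2 + 1 ∧ v.1 ∈ M.delta u.1 (w u.2)

/-- The nodes of the run DAG of `M` on `w`. -/
def runNodes (M : NBW Q A) (w : ℕ → A) : Set (Q × ℕ) :=
  {v | Relation.ReflTransGen (M.RunStep w) (M.init, 0) v}

/-- Odd rankings of the run DAG of `M` on `w`. -/
abbrev IsOddRunRanking (M : NBW Q A) (w : ℕ → A) (f : Q × ℕ → ℕ) : Prop :=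
  IsOddRanking (M.RunStep w) (Prod.fst ⁻¹' M.acc) (M.runNodes w) f

theorem mem_Lang_iff_exists_isPathIn :
    w ∈ M.Lang ↔ ∃ π, IsPathIn (M.RunStep w) (M.runNodes w) π ∧
      ∃ᶠ n in atTop, π n ∈ Prod.fst ⁻¹' M.acc := by
  constructor
  · rintro ⟨ρ, ⟨hρ0, hρ⟩, hacc⟩
    have hstep (n : ℕ) : M.RunStep w (ρ n, n) (ρ (n + 1), n + 1) := ⟨rfl, hρ n⟩
    have hmem (n : ℕ) : (ρ n, n) ∈ M.runNodes w := by
      induction n with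
      | zero => exact hρ0 ▸ .refl
      | succ n ih => exact ih.tail (hstep n)
    exact ⟨fun n => (ρ n, n), ⟨hmem, hstep⟩, frequently_atTop.2 hacc⟩
  · rintro ⟨π, hπ, hacc⟩
    obtain ⟨ρ, hρ0, hρ, k, hk⟩ := exists_path_extending_of_reflTransGen (hπ.mem 0) hπ.step
    have hlevel (n : ℕ) : (ρ n).2 = n := by
      simpa [hρ0] using
        IsPathIn.level_eq (T := Set.univ) (fun _ _ h => h.1) ⟨fun _ => trivial, hρ⟩ n
    refine ⟨fun n => (ρ n).1, ⟨by simp [hρ0], fun n => ?_⟩, frequently_atTop.1 ?_⟩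
    · simpa [hlevel n] using (hρ n).2
    · simpa [← hk] using (frequently_atTop_add_nat_iff (p := fun n => (ρ n).1 ∈ M.acc) k).1
        (by simpa [hk] using hacc)

theorem IsOddRunRanking.notMem_Lang {f : Q × ℕ → ℕ} (hf : M.IsOddRunRanking w f) :
    w ∉ M.Lang := by
  rw [mem_Lang_iff_exists_isPathIn]
  rintro ⟨π, hπ, hacc⟩
  exact hf.not_frequently_mem hπ hacc

theorem exists_isOddRunRanking_le [Finite Q] (hw : w ∉ M.Lang) :
    ∃ f, M.IsOddRunRanking w f ∧ ∀ v, f v ≤ 2 * M.accᶜ.ncard := by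
  refine exists_isOddRanking_le (level := Prod.snd) (fun _ _ h => h.1) _ (fun π hπ hacc => ?_)
    (.of_forall fun i => encard_nonaccSlice_snd_le M.acc _ i)
  exact hw (mem_Lang_iff_exists_isPathIn.2 ⟨π, hπ, hacc⟩)

end NBW

theorem ABW.Accepting.frequently_mem {B : ABW Q A} {E : Q × ℕ → Q × ℕ → Prop}
    (hE : B.Accepting w E) {π : ℕ → Q × ℕ} (hreach : Relation.ReflTransGen E (B.init, 0) (π 0))
    (hπ : ∀ n, E (π n) (π (n + 1))) : ∃ᶠ n in atTop, (π n).1 ∈ B.acc := by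
  obtain ⟨ρ, hρ0, hρ, k, hk⟩ := exists_path_extending_of_reflTransGen hreach hπ
  simpa only [hk] using
    (frequently_atTop_add_nat_iff k).2 (frequently_atTop.2 (hE ρ hρ0 hρ))

namespace KV

variable {k : ℕ} {E : (Q × ℕ) × ℕ → (Q × ℕ) × ℕ → Prop} {f : Q × ℕ → ℕ}

/-- The least rank with which a run `E` of `KV M k` visits the node `v` of the run DAG of `M`
(junk value `0` if `E` does not visit `v`). -/
noncomputable def minRank (M : NBW Q A) (k : ℕ) (E : (Q × ℕ) × ℕ → (Q × ℕ) × ℕ → Prop)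
    (v : Q × ℕ) : ℕ :=
  sInf {r | Relation.ReflTransGen E ((M.init, k), 0) ((v.1, r), v.2)}

theorem minRank_le_of_reachable {v : Q × ℕ} {r : ℕ}
    (h : Relation.ReflTransGen E ((M.init, k), 0) ((v.1, r), v.2)) : minRank M k E v ≤ r :=
  Nat.sInf_le h

/-- The run of `KV M k` induced by a ranking `f` of the run DAG of `M` on `w`. As only the targets
of edges are tied to `f`, the root may carry the rank `k`. -/
def rankedRun (M : NBW Q A) (w : ℕ → A) (f : Q × ℕ → ℕ) (p q : (Q × ℕ) × ℕ) : Prop :=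
  M.RunStep w (p.1.1, p.2) (q.1.1, q.2) ∧ q.1.2 = f (q.1.1, q.2)

theorem mem_runNodes_of_rankedRun {p : (Q × ℕ) × ℕ}
    (hp : Relation.ReflTransGen (rankedRun M w f) ((M.init, k), 0) p) :
    (p.1.1, p.2) ∈ M.runNodes w :=
  Relation.ReflTransGen.lift (p := M.RunStep w) (fun q : (Q × ℕ) × ℕ => (q.1.1, q.2))
    (fun _ _ h => h.1) _ _ hp

variable [Fintype Q]

theorem exists_step_of_reachable (hE : (KV M k).IsRun w E) {u v : Q × ℕ} {r : ℕ}
    (hu : Relation.ReflTransGen E ((M.init, k), 0) ((u.1, r), u.2)) (huv : M.RunStep w u v) :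
    ∃ r' ≤ r, E ((u.1, r), u.2) ((v.1, r'), v.2) := by
  obtain ⟨r', hr', hstep⟩ := ((sat_KV_delta_iff ..).1 (hE.2 _ _ hu)).2 v.1 huv.2
  exact ⟨r', hr', huv.1 ▸ hstep⟩

theorem reachable_minRank (hE : (KV M k).IsRun w E) {v : Q × ℕ} (hv : v ∈ M.runNodes w) :
    Relation.ReflTransGen E ((M.init, k), 0) ((v.1, minRank M k E v), v.2) := by
  have hvisited : ∃ r, Relation.ReflTransGen E ((M.init, k), 0) ((v.1, r), v.2) := by
    induction hv with
    | refl => exact ⟨k, .refl⟩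
    | tail _ huv ih =>
      obtain ⟨r, hr⟩ := ih
      obtain ⟨r', -, hstep⟩ := exists_step_of_reachable hE hr huv
      exact ⟨r', hr.tail hstep⟩
  exact Nat.sInf_mem hvisited

theorem minRank_le_of_step (hE : (KV M k).IsRun w E) {u v : Q × ℕ} (hu : u ∈ M.runNodes w)
    (huv : M.RunStep w u v) : minRank M k E v ≤ minRank M k E u := by
  have hreach := reachable_minRank hE hu
  obtain ⟨r, hr, hstep⟩ := exists_step_of_reachable hE hreach huv
  exact (minRank_le_of_reachable (hreach.tail hstep)).trans hr

theorem step_of_minRank_eq (hE : (KV M k).IsRun w E) {u v : Q × ℕ} (hu : u ∈ M.runNodes w)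
    (huv : M.RunStep w u v) (h : minRank M k E u = minRank M k E v) :
    E ((u.1, minRank M k E u), u.2) ((v.1, minRank M k E v), v.2) := by
  have hreach := reachable_minRank hE hu
  obtain ⟨r, hr, hstep⟩ := exists_step_of_reachable hE hreach huv
  have hle := minRank_le_of_reachable (hreach.tail hstep)
  rwa [hle.antisymm (hr.trans_eq h)]

theorem frequently_odd_minRank (hE : (KV M k).IsRun w E) (hacc : (KV M k).Accepting w E)
    {π : ℕ → Q × ℕ} (hπ : IsPathIn (M.RunStep w) (M.runNodes w) π) :
    ∃ᶠ n in atTop, Odd (minRank M k E (π n)) := by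
  have hanti : Antitone (minRank M k E ∘ π) :=
    antitone_nat_of_succ_le fun n => minRank_le_of_step hE (hπ.mem n) (hπ.step n)
  obtain ⟨N, hN⟩ := WellFoundedLT.antitone_chain_condition hanti
  have hconst (n : ℕ) : minRank M k E (π (n + N)) = minRank M k E (π (n + 1 + N)) :=
    (hN _ (by omega)).symm.trans (hN _ (by omega))
  have htail := hπ.drop N
  have hodd : ∃ᶠ n in atTop, Odd (minRank M k E (π (n + N))) ∧ minRank M k E (π (n + N)) ≤ k :=
    hacc.frequently_mem
      (π := fun n => (((π (n + N)).1, minRank M k E (π (n + N))), (π (n + N)).2))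
      (reachable_minRank hE (htail.mem 0))
      fun n => step_of_minRank_eq hE (htail.mem n) (htail.step n) (hconst n)
  exact (frequently_atTop_add_nat_iff N).1 (hodd.mono fun _ h => h.1)

theorem isOddRunRanking_minRank (hE : (KV M k).IsRun w E) (hacc : (KV M k).Accepting w E) :
    M.IsOddRunRanking w (minRank M k E) where
  le_of_step hu _ huv := minRank_le_of_step hE hu huv
  notMem_of_odd hv hodd hmem :=
    ((sat_KV_delta_iff ..).1 (hE.2 _ _ (reachable_minRank hE hv))).1 ⟨hmem, hodd⟩
  frequently_odd := frequently_odd_minRank hE hacc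

theorem isRun_rankedRun (hf : M.IsOddRunRanking w f) (hk : Even k) (hroot : f (M.init, 0) ≤ k) :
    (KV M k).IsRun w (rankedRun M w f) := by
  refine ⟨fun p q h => h.1.1, fun ⟨l, r⟩ i hreach => (sat_KV_delta_iff ..).2 ?_⟩
  have hmem : (l, i) ∈ M.runNodes w := mem_runNodes_of_rankedRun hreach
  have hrank : r = f (l, i) ∨ r = k := by
    rcases hreach.cases_tail with heq | ⟨p, -, hstep⟩
    · exact .inr (congrArg (·.1.2) heq)
    · exact .inl hstep.2
  have hle : f (l, i) ≤ r := by
    rcases hrank with rfl | rfl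
    · exact le_rfl
    · exact (hf.le_of_reflTransGen hmem).trans hroot
  refine ⟨fun ⟨hacc, hodd⟩ => ?_, fun l' hl' => ?_⟩
  · rcases hrank with rfl | rfl
    · exact hf.notMem_of_odd hmem hodd hacc
    · exact Nat.not_odd_iff_even.2 hk hodd
  · have hstep : M.RunStep w (l, i) (l', i + 1) := ⟨rfl, hl'⟩
    exact ⟨_, (hf.le_of_step hmem (hmem.tail hstep) hstep).trans hle, hstep, rfl⟩

theorem accepting_rankedRun (hf : M.IsOddRunRanking w f) (hroot : f (M.init, 0) ≤ k) :
    (KV M k).Accepting w (rankedRun M w f) := by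
  intro σ hσ0 hσ
  have hreach (n : ℕ) : Relation.ReflTransGen (rankedRun M w f) ((M.init, k), 0) (σ n) := by
    induction n with
    | zero => exact hσ0 ▸ .refl
    | succ n ih => exact ih.tail (hσ n)
  have hmem (n : ℕ) := mem_runNodes_of_rankedRun (hreach n)
  have hodd : ∃ᶠ n in atTop, Odd (f ((σ (n + 1)).1.1, (σ (n + 1)).2)) :=
    (frequently_atTop_add_nat_iff 1).2 (hf.frequently_odd ⟨hmem, fun n => (hσ n).1⟩)
  refine frequently_atTop.1 ((frequently_atTop_add_nat_iff 1).1 (hodd.mono fun n hn => ?_))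
  rw [← (hσ n).2] at hn
  exact ⟨hn, (hσ n).2.trans_le ((hf.le_of_reflTransGen (hmem (n + 1))).trans hroot)⟩

theorem exists_isOddRunRanking_of_mem_Lang (hw : w ∈ (KV M k).Lang) :
    ∃ f, M.IsOddRunRanking w f ∧ f (M.init, 0) ≤ k := by
  obtain ⟨E, hE, hacc⟩ := hw
  exact ⟨_, isOddRunRanking_minRank hE hacc, minRank_le_of_reachable .refl⟩

theorem mem_Lang_of_isOddRunRanking (hf : M.IsOddRunRanking w f) (hk : Even k)
    (hroot : f (M.init, 0) ≤ k) : w ∈ (KV M k).Lang :=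
  ⟨_, isRun_rankedRun hf hk hroot, accepting_rankedRun hf hroot⟩

end KV

end RunDAG

theorem kv_correct_general {Q A : Type*} [Fintype Q] (M : NBW Q A) :
    (∀ k' k : ℕ, Even k → k' ≤ k → (KV M k').Lang ⊆ (KV M k).Lang) ∧
    ∀ k : ℕ, Even k → 2 * (Fintype.card Q - M.acc.ncard) ≤ k → (KV M k).Lang = M.Langᶜ := by
  refine ⟨fun k' k hk hle w hw => ?_, fun k hk hle => ?_⟩
  · obtain ⟨f, hf, hroot⟩ := KV.exists_isOddRunRanking_of_mem_Lang hw
    exact KV.mem_Lang_of_isOddRunRanking hf hk (hroot.trans hle)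
  · rw [← Nat.card_eq_fintype_card, ← Set.ncard_compl] at hle
    ext w
    constructor
    · intro hw
      obtain ⟨f, hf, -⟩ := KV.exists_isOddRunRanking_of_mem_Lang hw
      exact hf.notMem_Lang
    · intro hw
      obtain ⟨f, hf, hbound⟩ := NBW.exists_isOddRunRanking_le hw
      exact KV.mem_Lang_of_isOddRunRanking hf hk ((hbound _).trans hle)

/-- For every NBW `A` and even `k' ≤ k`, `L(KV(A,k')) ⊆ L(KV(A,k))`; moreover for
`k = 2(|L| - |α|)`, `L(KV(A,k)) = Σ^ω \ L(A)`. -/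
theorem kv_correct {Q A : Type*} [Fintype Q] [Fintype A] (M : NBW Q A) :
    (∀ k' k : ℕ, Even k' → Even k → k' ≤ k → (KV M k').Lang ⊆ (KV M k).Lang) ∧
    (KV M (2 * (Fintype.card Q - M.acc.ncard))).Lang = M.Langᶜ :=
  ⟨fun k' k _ => (kv_correct_general M).1 k' k,
    (kv_correct_general M).2 _ (even_two_mul _) le_rfl⟩
end

section
/- For every alternating Büchi automaton A, L(MH(A)) = L(A). -/
-- The Miyano-Hayashi construction: an NBW over `2^Q × 2^Q` accepting `L(M)`.
open Classical in
noncomputable def MH {Q A : Type*} (M : ABW Q A) : NBW (Set Q × Set Q) A where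
  init := ({M.init}, ∅)
  delta := fun p σ =>
    if p.2 = ∅ then
      {q | ∃ s' : Set Q, q = (s', s' \ M.acc) ∧
            ∀ l ∈ p.1, PosBool.Sat s' (M.delta l σ)}
    else
      {q | ∃ s' o' : Set Q, q = (s', o' \ M.acc) ∧ o' ⊆ s' ∧
            (∀ l ∈ p.1, PosBool.Sat s' (M.delta l σ)) ∧
            (∀ l ∈ p.2, PosBool.Sat o' (M.delta l σ))}
  acc := {p | p.2 = ∅}

/-!
In the run DAG read off an accepting run of `MH M`, a path that avoids `M.acc` from some point on is
caught by the second component of that run right after the next index where this component is empty,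
and never leaves it again, so the component cannot be empty infinitely often.

Conversely, the second component of a run of `MH M` can be taken to follow the states of a run DAG
`E` that owe a visit to `M.acc`. If it were never empty from level `n` on, Kőnig's lemma would give
a path of `E` that avoids `M.acc` from level `n` on. The levels may be taken finite: a positive
formula satisfied by `X` is satisfied by a finite subset of `X`, so `E` can be pruned to a finitely
branching DAG.
-/

namespace PosBool

variable {Q : Type*} {φ : PosBool Q} {X Y : Set Q}

theorem Sat.mono (hX : φ.Sat X) (h : X ⊆ Y) : φ.Sat Y := by
  induction φ with
  | tru => trivial
  | fls => exact hX
  | var q => exact h hX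
  | and φ ψ ihφ ihψ => exact ⟨ihφ hX.1, ihψ hX.2⟩
  | or φ ψ ihφ ihψ => exact hX.imp ihφ ihψ

theorem Sat.exists_finite_subset (hX : φ.Sat X) : ∃ Y ⊆ X, Y.Finite ∧ φ.Sat Y := by
  induction φ with
  | tru => exact ⟨∅, X.empty_subset, Set.finite_empty, trivial⟩
  | fls => exact hX.elim
  | var q => exact ⟨{q}, Set.singleton_subset_iff.2 hX, Set.finite_singleton q, rfl⟩
  | and φ ψ ihφ ihψ =>
    obtain ⟨Y, hYX, hY, hφ⟩ := ihφ hX.1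
    obtain ⟨Z, hZX, hZ, hψ⟩ := ihψ hX.2
    exact ⟨Y ∪ Z, Set.union_subset hYX hZX, hY.union hZ,
      hφ.mono Set.subset_union_left, hψ.mono Set.subset_union_right⟩
  | or φ ψ ihφ ihψ =>
    rcases hX with hφ | hψ
    · obtain ⟨Y, hYX, hY, hφ⟩ := ihφ hφ
      exact ⟨Y, hYX, hY, Or.inl hφ⟩
    · obtain ⟨Y, hYX, hY, hψ⟩ := ihψ hψ
      exact ⟨Y, hYX, hY, Or.inr hψ⟩

end PosBool

open CategoryTheory in
theorem exists_forall_map_succ_eq {X : ℕ → Type*} [∀ i, Finite (X i)] [∀ i, Nonempty (X i)]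
    (f : ∀ i, X (i + 1) → X i) : ∃ x : ∀ i, X i, ∀ i, f i (x (i + 1)) = x i := by
  let F := Functor.ofOpSequence (C := Type _) fun i ↦ ↾(f i)
  have : ∀ i : ℕᵒᵖ, Finite (F.obj i) := fun i ↦ inferInstanceAs (Finite (X i.unop))
  have : ∀ i : ℕᵒᵖ, Nonempty (F.obj i) := fun i ↦ inferInstanceAs (Nonempty (X i.unop))
  obtain ⟨x, hx⟩ := nonempty_sections_of_finite_inverse_system F
  refine ⟨fun i ↦ x (.op i), fun i ↦ ?_⟩
  have hi := hx (homOfLE i.le_succ).op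
  rw [Functor.ofOpSequence_map_homOfLE_succ] at hi
  exact hi

namespace ABW

variable {Q A : Type*} {M : ABW Q A} {w : ℕ → A} {E F : Q × ℕ → Q × ℕ → Prop} {S T : Set Q} {i : ℕ}

/-- The states at level `i + 1` that are successors in the DAG `E` of states of `S` at level `i`. -/
def post (E : Q × ℕ → Q × ℕ → Prop) (i : ℕ) (S : Set Q) : Set Q :=
  {l' | ∃ l ∈ S, E (l, i) (l', i + 1)}

theorem post_mono (h : S ⊆ T) : post E i S ⊆ post E i T :=
  fun _ ⟨l, hl, hE⟩ ↦ ⟨l, h hl, hE⟩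

theorem finite_post (hE : ∀ p, {q | E p q}.Finite) (hS : S.Finite) : (post E i S).Finite := by
  have hpost : post E i S = ⋃ l ∈ S, (·, i + 1) ⁻¹' {q | E (l, i) q} := by
    ext l'
    simp [post]
  rw [hpost]
  exact hS.biUnion fun l _ ↦ (hE (l, i)).preimage (Prod.mk_left_injective _).injOn

theorem exists_path_of_subset_post {S : ℕ → Set Q} (hfin : ∀ i, (S i).Finite)
    (hne : ∀ n, ∃ i ≥ n, (S i).Nonempty) (hpost : ∀ i, S (i + 1) ⊆ post E i (S i)) :
    ∃ π : ℕ → Q, ∀ i, π i ∈ S i ∧ E (π i, i) (π (i + 1), i + 1) := by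
  have hanti : Antitone fun i ↦ (S i).Nonempty :=
    antitone_nat_of_succ_le fun i ⟨_, hl'⟩ ↦
      let ⟨l, hl, _⟩ := hpost i hl'
      ⟨l, hl⟩
  have hfin' : ∀ i, Finite (S i) := fun i ↦ (hfin i).to_subtype
  have hne' : ∀ i, Nonempty (S i) := fun i ↦
    let ⟨_, hij, hj⟩ := hne i
    (hanti hij hj).to_subtype
  have hparent : ∀ i, ∀ l' : S (i + 1), ∃ l : S i, E (l, i) (l', i + 1) := fun i l' ↦
    let ⟨l, hl, hE⟩ := hpost i l'.2
    ⟨⟨l, hl⟩, hE⟩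
  choose parent hparent using hparent
  obtain ⟨π, hπ⟩ := exists_forall_map_succ_eq (X := fun i ↦ S i) parent
  refine ⟨fun i ↦ π i, fun i ↦ ⟨(π i).2, ?_⟩⟩
  have hedge := hparent i (π (i + 1))
  rwa [hπ i] at hedge

/-- The states `l` such that the node `(l, i)` is reachable from the root of the DAG `E`. -/
def level (M : ABW Q A) (E : Q × ℕ → Q × ℕ → Prop) : ℕ → Set Q
  | 0 => {M.init}
  | i + 1 => post E i (level M E i)

theorem reachable_of_mem_level {l : Q} (hl : l ∈ level M E i) :
    Relation.ReflTransGen E (M.init, 0) (l, i) := by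
  induction i generalizing l with
  | zero => rw [Set.mem_singleton_iff.1 hl]
  | succ i ih =>
    obtain ⟨k, hk, hE⟩ := hl
    exact (ih hk).tail hE

theorem finite_level (hE : ∀ p, {q | E p q}.Finite) (i : ℕ) : (level M E i).Finite := by
  induction i with
  | zero => exact Set.finite_singleton M.init
  | succ i ih => exact finite_post hE ih

theorem IsRun.sat_post (hE : M.IsRun w E) (hS : S ⊆ level M E i) {l : Q} (hl : l ∈ S) :
    (M.delta l (w i)).Sat (post E i S) :=
  (hE.2 l i (reachable_of_mem_level (hS hl))).mono fun _ hl' ↦ ⟨l, hl, hl'⟩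

theorem IsRun.snd_path_eq (hE : M.IsRun w E) {π : ℕ → Q × ℕ} (h0 : π 0 = (M.init, 0))
    (hπ : ∀ i, E (π i) (π (i + 1))) (i : ℕ) : (π i).2 = i := by
  induction i with
  | zero => rw [h0]
  | succ i ih => rw [hE.1 _ _ (hπ i), ih]

theorem IsRun.exists_le_finite_succ (hE : M.IsRun w E) :
    ∃ F ≤ E, M.IsRun w F ∧ ∀ p, {q | F p q}.Finite := by
  have hY : ∀ p : Q × ℕ, ∃ Y ⊆ {l' | E p (l', p.2 + 1)}, Y.Finite ∧
      (Relation.ReflTransGen E (M.init, 0) p → (M.delta p.1 (w p.2)).Sat Y) := by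
    intro p
    by_cases hp : Relation.ReflTransGen E (M.init, 0) p
    · obtain ⟨Y, hYE, hfin, hsat⟩ := (hE.2 p.1 p.2 hp).exists_finite_subset
      exact ⟨Y, hYE, hfin, fun _ ↦ hsat⟩
    · exact ⟨∅, Set.empty_subset _, Set.finite_empty, fun h ↦ absurd h hp⟩
  choose Y hYE hfin hsat using hY
  let F : Q × ℕ → Q × ℕ → Prop := fun p q ↦ q.2 = p.2 + 1 ∧ q.1 ∈ Y p
  have hFE : F ≤ E := by
    rintro p ⟨l', _⟩ ⟨rfl, hl'⟩
    exact hYE p hl'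
  refine ⟨F, hFE, ⟨fun _ _ h ↦ h.1, fun l i hl ↦ ?_⟩, fun p ↦ ?_⟩
  · exact (hsat (l, i) (Relation.ReflTransGen.mono hFE _ _ hl)).mono fun l' hl' ↦ ⟨rfl, hl'⟩
  · refine ((hfin p).image (·, p.2 + 1)).subset ?_
    rintro ⟨l', _⟩ ⟨rfl, hl'⟩
    exact ⟨l', hl', rfl⟩

theorem Accepting.anti (hE : M.Accepting w E) (h : F ≤ E) : M.Accepting w F :=
  fun π h0 hπ ↦ hE π h0 fun i ↦ h _ _ (hπ i)

open Classical in
/-- The states at level `i` of the DAG `E` that owe a visit to `M.acc`, namely those reached by a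
path that avoids `M.acc` since the last reset. A reset takes all states of the level following one
where no visit is owed. -/
noncomputable def owing (M : ABW Q A) (E : Q × ℕ → Q × ℕ → Prop) : ℕ → Set Q
  | 0 => ∅
  | i + 1 => post E i (if owing M E i = ∅ then level M E i else owing M E i) \ M.acc

theorem owing_succ_of_eq_empty (h : owing M E i = ∅) :
    owing M E (i + 1) = level M E (i + 1) \ M.acc := by
  rw [owing, if_pos h, level]

theorem owing_succ_of_nonempty (h : (owing M E i).Nonempty) :
    owing M E (i + 1) = post E i (owing M E i) \ M.acc := by
  rw [owing, if_neg h.ne_empty]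

theorem owing_subset_level (i : ℕ) : owing M E i ⊆ level M E i := by
  induction i with
  | zero => exact Set.empty_subset _
  | succ i ih =>
    rcases (owing M E i).eq_empty_or_nonempty with h | h
    · rw [owing_succ_of_eq_empty h]
      exact Set.sdiff_subset
    · rw [owing_succ_of_nonempty h]
      exact Set.sdiff_subset.trans (post_mono ih)

theorem notMem_acc_of_mem_owing {l : Q} (hl : l ∈ owing M E i) : l ∉ M.acc := by
  cases i with
  | zero => exact hl.elim
  | succ i => exact hl.2

theorem Accepting.exists_owing_eq_empty (hE : M.Accepting w E)
    (hfin : ∀ i, (level M E i).Finite) (n : ℕ) : ∃ i ≥ n, owing M E i = ∅ := by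
  by_contra! hn
  let S : ℕ → Set Q := fun i ↦ {l ∈ level M E i | n ≤ i → l ∈ owing M E i}
  have hne : ∀ m, ∃ i ≥ m, (S i).Nonempty := fun m ↦
    let ⟨l, hl⟩ := hn (max m n) (le_max_right m n)
    ⟨max m n, le_max_left m n, l, owing_subset_level _ hl, fun _ ↦ hl⟩
  have hpost : ∀ i, S (i + 1) ⊆ post E i (S i) := by
    rintro i l' ⟨hl', howing⟩
    by_cases hi : n ≤ i
    · have hl'' := howing (hi.trans i.le_succ)
      rw [owing_succ_of_nonempty (hn i hi)] at hl''
      have hS : owing M E i ⊆ S i := fun l hl ↦ ⟨owing_subset_level i hl, fun _ ↦ hl⟩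
      exact post_mono hS hl''.1
    · have hS : level M E i ⊆ S i := fun l hl ↦ ⟨hl, fun h ↦ absurd h hi⟩
      exact post_mono hS hl'
  obtain ⟨π, hπ⟩ := exists_path_of_subset_post (fun i ↦ (hfin i).subset (Set.sep_subset _ _))
    hne hpost
  have hroot : π 0 = M.init := (hπ 0).1.1
  obtain ⟨i, hi, hacc⟩ := hE (fun i ↦ (π i, i)) (by rw [hroot]) (fun i ↦ (hπ i).2) n
  exact notMem_acc_of_mem_owing ((hπ i).1.2 hi) hacc

end ABW

namespace MH

variable {Q A : Type*} {M : ABW Q A} {w : ℕ → A} {ρ : ℕ → Set Q × Set Q} {p q : Set Q × Set Q}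
  {σ : A}

theorem mem_delta_iff_of_eq_empty (hp : p.2 = ∅) :
    q ∈ (MH M).delta p σ ↔ q.2 = q.1 \ M.acc ∧ ∀ l ∈ p.1, (M.delta l σ).Sat q.1 := by
  simp only [MH, if_pos hp, Set.mem_ofPred_eq]
  constructor
  · rintro ⟨s', rfl, hsat⟩
    exact ⟨rfl, hsat⟩
  · rintro ⟨hq, hsat⟩
    exact ⟨q.1, Prod.ext rfl hq, hsat⟩

theorem mem_delta_iff_of_nonempty (hp : p.2.Nonempty) :
    q ∈ (MH M).delta p σ ↔ (∀ l ∈ p.1, (M.delta l σ).Sat q.1) ∧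
      ∃ o ⊆ q.1, q.2 = o \ M.acc ∧ ∀ l ∈ p.2, (M.delta l σ).Sat o := by
  simp only [MH, if_neg hp.ne_empty, Set.mem_ofPred_eq]
  constructor
  · rintro ⟨s', o, rfl, hos, hs, ho⟩
    exact ⟨hs, o, hos, rfl, ho⟩
  · rintro ⟨hs, o, hos, hq, ho⟩
    exact ⟨q.1, o, Prod.ext rfl hq, hos, hs, ho⟩

theorem sat_of_mem_delta (hq : q ∈ (MH M).delta p σ) {l : Q} (hl : l ∈ p.1) :
    (M.delta l σ).Sat {l' ∈ q.1 | l ∈ p.2 → l' ∈ M.acc ∪ q.2} := by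
  rcases p.2.eq_empty_or_nonempty with hp | hp
  · exact (((mem_delta_iff_of_eq_empty hp).1 hq).2 l hl).mono fun l' hl' ↦
      ⟨hl', fun h ↦ absurd (hp ▸ h) (Set.notMem_empty l)⟩
  · obtain ⟨hs, o, hos, hqo, ho⟩ := (mem_delta_iff_of_nonempty hp).1 hq
    by_cases hlo : l ∈ p.2
    · refine (ho l hlo).mono fun l' hl' ↦ ⟨hos hl', fun _ ↦ ?_⟩
      rw [hqo, Set.union_sdiff_self]
      exact Or.inr hl'
    · exact (hs l hl).mono fun l' hl' ↦ ⟨hl', fun h ↦ absurd h hlo⟩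

/-- The run DAG of `M` read off a run `ρ` of `MH M`: each node is joined to the states in the first
component of `ρ` at the next level, except that a state owing a visit to `M.acc` is joined only to
those of them that are accepting or still owe one. -/
def runDag (M : ABW Q A) (ρ : ℕ → Set Q × Set Q) (p q : Q × ℕ) : Prop :=
  q.2 = p.2 + 1 ∧ q.1 ∈ (ρ q.2).1 ∧ (p.1 ∈ (ρ p.2).2 → q.1 ∈ M.acc ∪ (ρ q.2).2)

theorem mem_fst_of_reachable (hρ : (MH M).IsRun w ρ) {p : Q × ℕ}
    (hp : Relation.ReflTransGen (runDag M ρ) (M.init, 0) p) : p.1 ∈ (ρ p.2).1 := by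
  induction hp with
  | refl =>
    rw [hρ.1]
    exact Set.mem_singleton M.init
  | tail _ h _ => exact h.2.1

theorem isRun_runDag (hρ : (MH M).IsRun w ρ) : M.IsRun w (runDag M ρ) :=
  ⟨fun _ _ h ↦ h.1, fun _ i hl ↦
    (sat_of_mem_delta (hρ.2 i) (mem_fst_of_reachable hρ hl)).mono fun _ hl' ↦ ⟨rfl, hl'⟩⟩

theorem accepting_runDag (hρ : (MH M).IsRun w ρ) (hacc : ∀ n, ∃ i ≥ n, ρ i ∈ (MH M).acc) :
    M.Accepting w (runDag M ρ) := by
  intro π h0 hπ n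
  by_contra! hn
  have hlevel := (isRun_runDag hρ).snd_path_eq h0 hπ
  obtain ⟨i, hi, hρi⟩ := hacc n
  have hcaught : (π (i + 1)).1 ∈ (ρ (i + 1)).2 := by
    rw [((mem_delta_iff_of_eq_empty hρi).1 (hρ.2 i)).1]
    have hmem := (hπ i).2.1
    rw [hlevel] at hmem
    exact ⟨hmem, hn _ (by omega)⟩
  have htrapped : ∀ j ≥ i + 1, (π j).1 ∈ (ρ j).2 := by
    intro j hj
    induction j, hj using Nat.le_induction with
    | base => exact hcaught
    | succ j hj ih =>
      have hstep := (hπ j).2.2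
      rw [hlevel, hlevel] at hstep
      exact (hstep ih).resolve_left (hn _ (by omega))
  obtain ⟨j, hj, hρj⟩ := hacc (i + 1)
  have hempty : (ρ j).2 = ∅ := hρj
  exact Set.notMem_empty _ (hempty ▸ htrapped j hj)

theorem isRun_level_owing {E : Q × ℕ → Q × ℕ → Prop} (hE : M.IsRun w E) :
    (MH M).IsRun w fun i ↦ (M.level E i, M.owing E i) := by
  refine ⟨rfl, fun i ↦ ?_⟩
  have hlevel : ∀ l ∈ M.level E i, (M.delta l (w i)).Sat (M.level E (i + 1)) :=
    fun _ hl ↦ hE.sat_post subset_rfl hl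
  rcases (M.owing E i).eq_empty_or_nonempty with h | h
  · exact (mem_delta_iff_of_eq_empty h).2 ⟨ABW.owing_succ_of_eq_empty h, hlevel⟩
  · exact (mem_delta_iff_of_nonempty h).2
      ⟨hlevel, _, ABW.post_mono (ABW.owing_subset_level i), ABW.owing_succ_of_nonempty h,
        fun _ hl ↦ hE.sat_post (ABW.owing_subset_level i) hl⟩

end MH

theorem mh_correct_general {Q A : Type*} (M : ABW Q A) : (MH M).Lang = M.Lang := by
  apply Set.Subset.antisymm
  · rintro w ⟨ρ, hρ, hacc⟩
    exact ⟨MH.runDag M ρ, MH.isRun_runDag hρ, MH.accepting_runDag hρ hacc⟩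
  · rintro w ⟨E, hE, hacc⟩
    obtain ⟨F, hFE, hF, hfin⟩ := hE.exists_le_finite_succ
    exact ⟨fun i ↦ (M.level F i, M.owing F i), MH.isRun_level_owing hF,
      (hacc.anti hFE).exists_owing_eq_empty (ABW.finite_level hfin)⟩

/-- For every alternating Büchi automaton `A`, `L(MH(A)) = L(A)`. -/
theorem mh_correct {Q A : Type*} [Fintype Q] [Fintype A] (M : ABW Q A) :
    (MH M).Lang = M.Lang :=
  mh_correct_general M
end

section
/- For every nondeterministic Büchi automaton A = ⟨L, ι, Σ, δ, α⟩ and all even numbers k', k with 0 ≤ k' ≤ k, L(KVMH(A, k')) ⊆ L(KVMH(A, k)); moreover, for k = 2(|L| − |α|), L(KVMH(A, k)) = Σ^ω \ L(A). -/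
/-- `Q_k`: sets of pairs `(l, n)` with `n ≤ k` and `n` even whenever `l ∈ α`. -/
def Qk {Q A : Type*} (M : NBW Q A) (k : ℕ) : Set (Set (Q × ℕ)) :=
  {s | ∀ p ∈ s, p.2 ≤ k ∧ (p.1 ∈ M.acc → Even p.2)}

/-- `odd = L × [k]^odd`. -/
def kvOdd (Q : Type*) (k : ℕ) : Set (Q × ℕ) := {p | Odd p.2 ∧ p.2 ≤ k}

/-- `∀ (l,n) ∈ s, ∀ l' ∈ δ(l,σ), ∃ n' ≤ n, (l',n') ∈ s'`. -/
def kvStep {Q A : Type*} (M : NBW Q A) (σ : A) (s s' : Set (Q × ℕ)) : Prop :=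
  ∀ p ∈ s, ∀ l' ∈ M.delta p.1 σ, ∃ n' ≤ p.2, (l', n') ∈ s'

-- The composition of the Kupferman-Vardi and Miyano-Hayashi constructions:
-- an NBW over `Q_k × Q_k` (embedded in pairs of sets of pairs) accepting `L^c(M)`
-- when `k = 2(|L| - |α|)`.
open Classical in
noncomputable def KVMH {Q A : Type*} (M : NBW Q A) (k : ℕ) :
    NBW (Set (Q × ℕ) × Set (Q × ℕ)) A where
  init := ({(M.init, k)}, ∅)
  delta := fun p σ =>
    if p.2 = ∅ then
      {q | ∃ s' ∈ Qk M k, q = (s', s' \ kvOdd Q k) ∧ kvStep M σ p.1 s'}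
    else
      {q | ∃ s' ∈ Qk M k, ∃ o', q = (s', o' \ kvOdd Q k) ∧ o' ⊆ s' ∧
            kvStep M σ p.1 s' ∧ kvStep M σ p.2 o'}
  acc := {p | p.2 = ∅}

/-- The pre-order `≼_univ` on `Q_k × Q_k`. -/
def univLe {Q : Type*} (p q : Set (Q × ℕ) × Set (Q × ℕ)) : Prop :=
  (∀ x ∈ p.1, ∃ n' ≤ x.2, (x.1, n') ∈ q.1) ∧
  (∀ x ∈ p.2, ∃ n' ≤ x.2, (x.1, n') ∈ q.2) ∧
  (p.2 = ∅ ↔ q.2 = ∅)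

/-!
The bound on ranks only enters through the initial rank and the set `Qk M k`, and enlarging either
one can only add transitions; this gives monotonicity in `k`.

Soundness: along an accepting run of `M`, the least rank that a run of `KVMH M k` attaches to the
current state never increases, so it stabilises, at an even value because accepting states carry
even ranks only. From the next breakpoint on, the current state with this rank sits in the second
component, which is never empty again.

Completeness: in the run DAG of `M` on a rejected word, alternately delete the vertices that start
no infinite path and those that reach no accepting vertex. Unless nothing is left, each deletion of
the second kind removes a whole infinite path of nonaccepting vertices, so after `|L| - |α|` rounds
almost all levels are accepting, and then no infinite path can be left. The stage at which a vertex
is deleted is an odd ranking in the sense of Kupferman and Vardi, and such a ranking is an accepting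
run of `KVMH M k`: by Kőnig's lemma, infinitely many breakpoints exist, since otherwise some
infinite path would have only even ranks.
-/

open Relation

section InfiniteSequences

open CategoryTheory Opposite

variable {α : Type*} {r : α → α → Prop}

/-- Kőnig's lemma for layered relations. -/
theorem exists_seq_of_finite_layers {s : ℕ → Set α} (hfin : ∀ n, (s n).Finite)
    (hne : ∀ n, (s n).Nonempty) (hpred : ∀ n, ∀ b ∈ s (n + 1), ∃ a ∈ s n, r a b) :
    ∃ f : ℕ → α, ∀ n, f n ∈ s n ∧ r (f n) (f (n + 1)) := by
  choose pred hmem hrel using hpred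
  let F : ℕᵒᵖ ⥤ Type _ := .ofOpSequence (X := fun n => s n)
    fun n => ↾fun b : s (n + 1) => ⟨pred n b b.2, hmem n b b.2⟩
  have : ∀ n, Finite (F.obj n) := fun n => (hfin n.unop).to_subtype
  have : ∀ n, Nonempty (F.obj n) := fun n => (hne n.unop).to_subtype
  obtain ⟨u, hu⟩ := nonempty_sections_of_finite_inverse_system F
  refine ⟨fun n => (u (op n)).1, fun n => ⟨(u (op n)).2, ?_⟩⟩
  have hpred : pred n (u (op (n + 1))).1 (u (op (n + 1))).2 = (u (op n)).1 := by
    rw [← hu (homOfLE (Nat.le_add_right n 1)).op, Functor.ofOpSequence_map_homOfLE_succ]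
    rfl
  simpa only [hpred] using hrel n _ (u (op (n + 1))).2

/-- The points from which some `r`-chain with exactly `n` steps ends in `s`. -/
def reachesIn (r : α → α → Prop) (s : Set α) : ℕ → Set α
  | 0 => s
  | n + 1 => {a | ∃ b ∈ reachesIn r s n, r a b}

theorem exists_mem_reachesIn_of_transGen {s : Set α} {a b : α} (hab : TransGen r a b)
    (hb : b ∈ s) : ∃ n, a ∈ reachesIn r s (n + 1) := by
  induction hab using TransGen.head_induction_on with
  | single h => exact ⟨0, b, hb, h⟩
  | head h _ ih => exact ih.imp' (· + 1) fun n hn => ⟨_, hn, h⟩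

/-- Always stepping to a point closer to `s` reaches `s` again and again. -/
theorem exists_seq_frequently_mem {s : Set α} (hs : ∀ a ∈ s, ∃ b ∈ s, TransGen r a b)
    {a : α} (ha : a ∈ s) :
    ∃ f : ℕ → α, f 0 = a ∧ (∀ n, r (f n) (f (n + 1))) ∧ ∀ n, ∃ m ≥ n, f m ∈ s := by
  classical
  let t : Set α := {x | ∃ n, x ∈ reachesIn r s (n + 1)}
  have hst : ∀ x ∈ s, x ∈ t := fun x hx =>
    let ⟨_, hb, hxb⟩ := hs x hx
    exists_mem_reachesIn_of_transGen hxb hb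
  let dist : t → ℕ := fun x => Nat.find x.2
  have closer : ∀ x : t, ∃ y : t, r x y ∧ (y.1 ∈ s ∨ dist y < dist x) := by
    intro x
    obtain ⟨y, hy, hxy⟩ := Nat.find_spec x.2
    change y ∈ reachesIn r s (dist x) at hy
    cases hd : dist x with
    | zero => rw [hd] at hy; exact ⟨⟨y, hst y hy⟩, hxy, .inl hy⟩
    | succ n =>
      rw [hd] at hy
      exact ⟨⟨y, n, hy⟩, hxy, .inr (Nat.lt_succ_of_le (Nat.find_min' ⟨n, hy⟩ hy))⟩
  choose next hnext hcloser using closer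
  have returns : ∀ x : t, ∃ m, (next^[m] x).1 ∈ s := by
    intro x
    induction hd : dist x using Nat.strong_induction_on generalizing x with
    | _ d ih =>
      rcases hcloser x with h | h
      · exact ⟨1, h⟩
      · obtain ⟨m, hm⟩ := ih _ (hd ▸ h) (next x) rfl
        exact ⟨m + 1, hm⟩
  refine ⟨fun n => (next^[n] ⟨a, hst a ha⟩).1, rfl, fun n => ?_, fun n => ?_⟩
  · simpa only [Function.iterate_succ_apply'] using hnext _
  · obtain ⟨m, hm⟩ := returns (next^[n] ⟨a, hst a ha⟩)
    exact ⟨m + n, Nat.le_add_left n m, by rwa [← Function.iterate_add_apply] at hm⟩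

end InfiniteSequences

namespace NBW

variable {Q A : Type*} {M : NBW Q A} {w : ℕ → A}

theorem mem_lang_of_delta_subset {ρ : ℕ → Q} (hρ : ∀ i, ρ (i + 1) ∈ M.delta (ρ i) (w i))
    (h0 : M.delta (ρ 0) (w 0) ⊆ M.delta M.init (w 0)) (hacc : ∀ n, ∃ i ≥ n, ρ i ∈ M.acc) :
    w ∈ M.Lang := by
  refine ⟨fun i => Nat.casesOn i M.init fun j => ρ (j + 1), ⟨rfl, fun i => ?_⟩, fun n => ?_⟩
  · cases i with
    | zero => exact h0 (hρ 0)
    | succ i => exact hρ (i + 1)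
  · obtain ⟨i, hi, hmem⟩ := hacc (n + 1)
    obtain ⟨j, rfl⟩ := Nat.exists_eq_add_of_le' (Nat.le_of_add_left_le hi)
    exact ⟨j + 1, by omega, hmem⟩

end NBW

namespace KVMH

variable {Q A : Type*} {M : NBW Q A} {w : ℕ → A}

/-- The pairs of even rank: what remains of a set of pairs after `kvOdd` has been removed from it,
independently of the rank bound (see `sdiff_kvOdd`). -/
def evenPart (s : Set (Q × ℕ)) : Set (Q × ℕ) := {x ∈ s | Even x.2}

theorem sdiff_kvOdd {k : ℕ} {s : Set (Q × ℕ)} (hs : ∀ x ∈ s, x.2 ≤ k) :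
    s \ kvOdd Q k = evenPart s := by
  ext x
  simp only [kvOdd, evenPart, Set.mem_sdiff, Set.mem_ofPred_eq, ← Nat.not_even_iff_odd]
  exact and_congr_right fun hx => by simp [hs x hx]

theorem mem_delta_iff {k : ℕ} {p q : Set (Q × ℕ) × Set (Q × ℕ)} {σ : A} :
    q ∈ (KVMH M k).delta p σ ↔ q.1 ∈ Qk M k ∧ kvStep M σ p.1 q.1 ∧
      (p.2 = ∅ → q.2 = evenPart q.1) ∧
      (p.2 ≠ ∅ → ∃ o ⊆ q.1, kvStep M σ p.2 o ∧ q.2 = evenPart o) := by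
  have sdiff_eq : ∀ {s}, q.1 ∈ Qk M k → s ⊆ q.1 → s \ kvOdd Q k = evenPart s :=
    fun hq hs => sdiff_kvOdd fun x hx => (hq x (hs hx)).1
  obtain ⟨s, o⟩ := q
  by_cases h : p.2 = ∅
  · simp only [KVMH, h, if_true, Set.mem_ofPred_eq, Prod.mk.injEq]
    constructor
    · rintro ⟨s, hs, ⟨rfl, rfl⟩, hstep⟩
      exact ⟨hs, hstep, fun _ => sdiff_eq hs subset_rfl, fun h => absurd rfl h⟩
    · rintro ⟨hs, hstep, ho, -⟩
      exact ⟨s, hs, ⟨rfl, (ho trivial).trans (sdiff_eq hs subset_rfl).symm⟩, hstep⟩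
  · simp only [KVMH, h, if_false, Set.mem_ofPred_eq, Prod.mk.injEq]
    constructor
    · rintro ⟨s, hs, o, ⟨rfl, rfl⟩, hsub, hstep, hstep'⟩
      exact ⟨hs, hstep, False.elim, fun _ => ⟨o, hsub, hstep', sdiff_eq hs hsub⟩⟩
    · rintro ⟨hs, hstep, -, ho⟩
      obtain ⟨o', hsub, hstep', rfl⟩ := ho h
      exact ⟨s, hs, o', ⟨rfl, (sdiff_eq hs hsub).symm⟩, hsub, hstep, hstep'⟩

theorem delta_mono {k' k : ℕ} (hk : k' ≤ k) (p : Set (Q × ℕ) × Set (Q × ℕ)) (σ : A) :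
    (KVMH M k').delta p σ ⊆ (KVMH M k).delta p σ := by
  intro q hq
  rw [mem_delta_iff] at hq ⊢
  exact ⟨fun x hx => ⟨(hq.1 x hx).1.trans hk, (hq.1 x hx).2⟩, hq.2⟩

theorem kvStep_of_forall_exists_le {σ : A} {s t u : Set (Q × ℕ)}
    (hst : ∀ x ∈ s, ∃ n ≤ x.2, (x.1, n) ∈ t) (ht : kvStep M σ t u) : kvStep M σ s u := by
  intro x hx l hl
  obtain ⟨n, hn, hmem⟩ := hst x hx
  obtain ⟨n', hn', hmem'⟩ := ht _ hmem l hl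
  exact ⟨n', hn'.trans hn, hmem'⟩

theorem delta_subset_of_univLe {k : ℕ} {p q : Set (Q × ℕ) × Set (Q × ℕ)} (hpq : univLe p q)
    (σ : A) : (KVMH M k).delta q σ ⊆ (KVMH M k).delta p σ := by
  obtain ⟨h1, h2, hempty⟩ := hpq
  intro q' hq'
  rw [mem_delta_iff] at hq' ⊢
  obtain ⟨hQk, hstep, hreset, hkeep⟩ := hq'
  refine ⟨hQk, kvStep_of_forall_exists_le h1 hstep, fun hp => hreset (hempty.1 hp), fun hp => ?_⟩
  obtain ⟨o, hsub, hstep', ho⟩ := hkeep (hp ∘ hempty.2)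
  exact ⟨o, hsub, kvStep_of_forall_exists_le h2 hstep', ho⟩

theorem univLe_init_singleton {k n : ℕ} (hn : n ≤ k) :
    univLe (KVMH M k).init ({(M.init, n)}, ∅) :=
  ⟨by rintro _ rfl; exact ⟨n, hn, rfl⟩, fun _ h => h.elim, Iff.rfl⟩

theorem lang_mono (M : NBW Q A) {k' k : ℕ} (hk : k' ≤ k) :
    (KVMH M k').Lang ⊆ (KVMH M k).Lang := by
  rintro w ⟨ρ, ⟨h0, hρ⟩, hacc⟩
  refine NBW.mem_lang_of_delta_subset (fun i => delta_mono hk _ _ (hρ i)) ?_ hacc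
  rw [h0]
  exact delta_subset_of_univLe (univLe_init_singleton hk) _

section Soundness

variable {k : ℕ} {S : ℕ → Set (Q × ℕ) × Set (Q × ℕ)} {ρ : ℕ → Q}

theorem exists_even_eventually_isLeast (hS : (KVMH M k).IsRun w S) (hρ : M.IsRun w ρ)
    (hacc : ∀ n, ∃ i ≥ n, ρ i ∈ M.acc) :
    ∃ m N, Even m ∧ ∀ i ≥ N, IsLeast {n | (ρ i, n) ∈ (S i).1} m := by
  have descend : ∀ i n, (ρ i, n) ∈ (S i).1 → ∃ n' ≤ n, (ρ (i + 1), n') ∈ (S (i + 1)).1 :=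
    fun i n hn => (mem_delta_iff.1 (hS.2 i)).2.1 _ hn _ (hρ.2 i)
  have hne : ∀ i, {n | (ρ i, n) ∈ (S i).1}.Nonempty := by
    intro i
    induction i with
    | zero => exact ⟨k, by rw [hS.1, hρ.1]; rfl⟩
    | succ i ih =>
      obtain ⟨n, hn⟩ := ih
      exact (descend i n hn).imp fun _ h => h.2
  choose m hm using fun i => (⟨_, isLeast_csInf (hne i)⟩ : ∃ m, IsLeast _ m)
  have hanti : Antitone m := antitone_nat_of_succ_le fun i =>
    let ⟨_, hle, hmem⟩ := descend i (m i) (hm i).1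
    ((hm (i + 1)).2 hmem).trans hle
  obtain ⟨N, hN⟩ := WellFoundedLT.antitone_chain_condition hanti
  refine ⟨m N, N, ?_, fun i hi => hN i hi ▸ hm i⟩
  obtain ⟨i, hi, hacc⟩ := hacc (N + 1)
  obtain ⟨j, rfl⟩ := Nat.exists_eq_add_of_le' (Nat.le_of_add_left_le hi)
  rw [hN _ (Nat.le_of_succ_le hi)]
  exact ((mem_delta_iff.1 (hS.2 j)).1 _ (hm (j + 1)).1).2 hacc

theorem mem_breakpoint_of_isLeast (hS : (KVMH M k).IsRun w S) (hρ : M.IsRun w ρ) {m t : ℕ}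
    (heven : Even m) (hm : ∀ i ≥ t, IsLeast {n | (ρ i, n) ∈ (S i).1} m) (ht : (S t).2 = ∅) :
    ∀ i > t, (ρ i, m) ∈ (S i).2 := by
  intro i hi
  induction i, hi using Nat.le_induction with
  | base =>
    rw [(mem_delta_iff.1 (hS.2 t)).2.2.1 ht]
    exact ⟨(hm (t + 1) t.le_succ).1, heven⟩
  | succ i hi ih =>
    obtain ⟨-, -, -, hkeep⟩ := mem_delta_iff.1 (hS.2 i)
    obtain ⟨o, hsub, hstep, ho⟩ := hkeep (Set.nonempty_of_mem ih).ne_empty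
    obtain ⟨n, hn, hmem⟩ := hstep _ ih _ (hρ.2 i)
    obtain rfl : n = m := le_antisymm hn ((hm (i + 1) (by omega)).2 (hsub hmem))
    rw [ho]
    exact ⟨hmem, heven⟩

theorem lang_subset_compl (M : NBW Q A) (k : ℕ) : (KVMH M k).Lang ⊆ M.Langᶜ := by
  rintro w ⟨S, hS, hSacc⟩ ⟨ρ, hρ, hρacc⟩
  obtain ⟨m, N, heven, hm⟩ := exists_even_eventually_isLeast hS hρ hρacc
  obtain ⟨t, ht, hempty⟩ := hSacc N
  obtain ⟨i, hi, hempty'⟩ := hSacc (t + 1)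
  have hmem := mem_breakpoint_of_isLeast hS hρ heven (fun i hi => hm i (ht.trans hi)) hempty i hi
  exact (Set.nonempty_of_mem hmem).ne_empty hempty'

end Soundness

end KVMH

namespace NBW

variable {Q A : Type*} {M : NBW Q A} {w : ℕ → A}

section RunDAG

/-- The states reachable on the first `i` letters of `w`. -/
def level (M : NBW Q A) (w : ℕ → A) : ℕ → Set Q
  | 0 => {M.init}
  | i + 1 => ⋃ l ∈ M.level w i, M.delta l (w i)

/-- The run DAG of `M` on `w`, given by its vertices; `(i, l)` stands for the state `l` at
level `i`. Its edges are `NBW.Edge`. -/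
def runDAG (M : NBW Q A) (w : ℕ → A) : Set (ℕ × Q) := {v | v.2 ∈ M.level w v.1}

/-- The edge relation of the run DAG. -/
def Edge (M : NBW Q A) (w : ℕ → A) (v v' : ℕ × Q) : Prop :=
  v'.1 = v.1 + 1 ∧ v'.2 ∈ M.delta v.2 (w v.1)

/-- An infinite path along the edges of the run DAG, with an arbitrary starting point. -/
def IsPath (M : NBW Q A) (w : ℕ → A) (p : ℕ → ℕ × Q) : Prop :=
  ∀ j, M.Edge w (p j) (p (j + 1))

theorem level_finite (hδ : ∀ l σ, (M.delta l σ).Finite) (i : ℕ) : (M.level w i).Finite := by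
  induction i with
  | zero => exact Set.finite_singleton _
  | succ i ih => exact ih.biUnion fun l _ => hδ l (w i)

theorem Edge.mem_runDAG {v v' : ℕ × Q} (he : M.Edge w v v') (hv : v ∈ M.runDAG w) :
    v' ∈ M.runDAG w := by
  obtain ⟨i, l⟩ := v
  obtain ⟨i', l'⟩ := v'
  obtain ⟨rfl, hl⟩ : i' = i + 1 ∧ l' ∈ M.delta l (w i) := he
  exact Set.mem_biUnion hv hl

theorem IsPath.shift {p : ℕ → ℕ × Q} (hp : M.IsPath w p) (i : ℕ) :
    M.IsPath w fun j => p (i + j) :=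
  fun j => hp (i + j)

theorem IsPath.exists_cons {p : ℕ → ℕ × Q} (hp : M.IsPath w p) {v : ℕ × Q}
    (hv : M.Edge w v (p 0)) : ∃ q, M.IsPath w q ∧ q 0 = v ∧ ∀ j, q (j + 1) = p j :=
  ⟨fun j => Nat.casesOn j v p, fun j => Nat.casesOn j hv hp, rfl, fun _ => rfl⟩

theorem IsPath.fst_eq {p : ℕ → ℕ × Q} (hp : M.IsPath w p) (j : ℕ) : (p j).1 = (p 0).1 + j := by
  induction j with
  | zero => rfl
  | succ j ih => rw [(hp j).1, ih, add_assoc]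

theorem IsPath.mem_runDAG {p : ℕ → ℕ × Q} (hp : M.IsPath w p) (h0 : p 0 ∈ M.runDAG w) (j : ℕ) :
    p j ∈ M.runDAG w := by
  induction j with
  | zero => exact h0
  | succ j ih => exact (hp j).mem_runDAG ih

theorem mem_lang_of_isPath {p : ℕ → ℕ × Q} (hp : M.IsPath w p) (h0 : p 0 ∈ M.runDAG w)
    (hacc : ∀ n, ∃ i ≥ n, (p i).2 ∈ M.acc) : w ∈ M.Lang := by
  induction h : (p 0).1 generalizing p with
  | zero =>
    have hlevel : ∀ i, (p i).1 = i := fun i => by rw [hp.fst_eq, h, zero_add]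
    rw [runDAG, Set.mem_ofPred_eq, h] at h0
    exact ⟨fun i => (p i).2, ⟨h0, fun i => by simpa only [hlevel] using (hp i).2⟩, hacc⟩
  | succ i ih =>
    rw [runDAG, Set.mem_ofPred_eq, h] at h0
    obtain ⟨l, hl, hlp⟩ := Set.mem_iUnion₂.1 h0
    obtain ⟨q, hq, hq0, hqp⟩ := hp.exists_cons (v := (i, l)) ⟨h, hlp⟩
    refine ih hq (hq0 ▸ hl) (fun n => ?_) (by rw [hq0])
    obtain ⟨j, hj, hmem⟩ := hacc n
    exact ⟨j + 1, Nat.le_succ_of_le hj, hqp j ▸ hmem⟩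

end RunDAG

section Filtration

/-- The vertices from which an infinite path inside `G` starts. -/
def infinitePart (M : NBW Q A) (w : ℕ → A) (G : Set (ℕ × Q)) : Set (ℕ × Q) :=
  {v | ∃ p, M.IsPath w p ∧ p 0 = v ∧ ∀ j, p j ∈ G}

/-- The vertices of `G` from which an accepting vertex of `G` can be reached. The connecting path
is not required to stay in `G`: it does so automatically for the sets `NBW.layer`, which are closed
under predecessors. -/
def acceptingPart (M : NBW Q A) (w : ℕ → A) (G : Set (ℕ × Q)) : Set (ℕ × Q) :=
  {v ∈ G | ∃ u ∈ G, u.2 ∈ M.acc ∧ ReflTransGen (M.Edge w) v u}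

/-- The filtration of the run DAG used by Kupferman and Vardi: even stages delete the vertices
that start no infinite path, odd stages those that reach no accepting vertex. -/
def layer (M : NBW Q A) (w : ℕ → A) : ℕ → Set (ℕ × Q)
  | 0 => M.runDAG w
  | r + 1 => if Even r then M.infinitePart w (M.layer w r) else M.acceptingPart w (M.layer w r)

variable {r : ℕ} {v v' : ℕ × Q}

theorem layer_succ_of_even (hr : Even r) :
    M.layer w (r + 1) = M.infinitePart w (M.layer w r) :=
  if_pos hr

theorem layer_succ_of_odd (hr : Odd r) :
    M.layer w (r + 1) = M.acceptingPart w (M.layer w r) :=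
  if_neg (Nat.not_even_iff_odd.2 hr)

theorem layer_antitone : Antitone (M.layer w) := by
  refine antitone_nat_of_succ_le fun r => ?_
  rcases r.even_or_odd with hr | hr
  · rw [layer_succ_of_even hr]
    rintro _ ⟨p, -, rfl, hp⟩
    exact hp 0
  · rw [layer_succ_of_odd hr]
    exact fun v hv => hv.1

theorem mem_runDAG_of_mem_layer (hv : v ∈ M.layer w r) : v ∈ M.runDAG w :=
  layer_antitone r.zero_le hv

theorem Edge.mem_layer (he : M.Edge w v v') (hv : v ∈ M.runDAG w) (hv' : v' ∈ M.layer w r) :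
    v ∈ M.layer w r := by
  induction r with
  | zero => exact hv
  | succ r ih =>
    have hvr := ih (layer_antitone r.le_succ hv')
    rcases r.even_or_odd with hr | hr
    · rw [layer_succ_of_even hr] at hv' ⊢
      obtain ⟨p, hp, rfl, hpr⟩ := hv'
      obtain ⟨q, hq, rfl, hqp⟩ := hp.exists_cons he
      exact ⟨q, hq, rfl, fun j => Nat.casesOn j hvr fun j => hqp j ▸ hpr j⟩
    · rw [layer_succ_of_odd hr] at hv' ⊢
      obtain ⟨-, u, hu, huacc, hvu⟩ := hv'
      exact ⟨hvr, u, hu, huacc, hvu.head he⟩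

theorem IsPath.mem_layer_succ {p : ℕ → ℕ × Q} (hp : M.IsPath w p) (hr : Even r)
    (hpr : ∀ j, p j ∈ M.layer w r) (j : ℕ) : p j ∈ M.layer w (r + 1) := by
  rw [layer_succ_of_even hr]
  exact ⟨_, hp.shift j, rfl, fun i => hpr (j + i)⟩

theorem exists_isPath_of_mem_layer_succ (hr : Even r) (hv : v ∈ M.layer w (r + 1)) :
    ∃ p, M.IsPath w p ∧ p 0 = v ∧ ∀ j, p j ∈ M.layer w (r + 1) := by
  have hv' := hv
  rw [layer_succ_of_even hr] at hv'
  obtain ⟨p, hp, hp0, hpr⟩ := hv'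
  exact ⟨p, hp, hp0, hp.mem_layer_succ hr hpr⟩

/-- If every vertex of the stage reached an accepting vertex, then so would its successors on
infinite paths, and chaining such paths would give an accepting run. -/
theorem exists_notMem_layer (hw : w ∉ M.Lang) (hr : Even r)
    (hne : (M.layer w (r + 1)).Nonempty) :
    ∃ v ∈ M.layer w (r + 1), v ∉ M.layer w (r + 2) := by
  by_contra! hcon
  have reach : ∀ v ∈ M.layer w (r + 1),
      ∃ u ∈ M.layer w (r + 1) ∩ {u | u.2 ∈ M.acc}, ReflTransGen (M.Edge w) v u := by
    intro v hv
    have hv := hcon v hv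
    rw [layer_succ_of_odd hr.add_one] at hv
    obtain ⟨-, u, hu, huacc, hvu⟩ := hv
    exact ⟨u, ⟨hu, huacc⟩, hvu⟩
  obtain ⟨v, hv⟩ := hne
  obtain ⟨a, ha, -⟩ := reach v hv
  obtain ⟨p, rfl, hp, hpacc⟩ := exists_seq_frequently_mem (r := M.Edge w) (fun v hv => by
    obtain ⟨p, hp, rfl, hpr⟩ := exists_isPath_of_mem_layer_succ hr hv.1
    obtain ⟨u, hu, hpu⟩ := reach (p 1) (hpr 1)
    exact ⟨u, hu, .head' (hp 0) hpu⟩) ha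
  exact hw (mem_lang_of_isPath hp (mem_runDAG_of_mem_layer ha.1)
    fun n => (hpacc n).imp fun _ h => ⟨h.1, h.2.2⟩)

theorem exists_isPath_disjoint_layer (hw : w ∉ M.Lang) (hr : Even r)
    (hne : (M.layer w (r + 1)).Nonempty) :
    ∃ p, M.IsPath w p ∧ ∀ j, p j ∈ M.layer w (r + 1) ∧ p j ∉ M.layer w (r + 2) := by
  obtain ⟨v, hv, hv'⟩ := exists_notMem_layer hw hr hne
  obtain ⟨p, hp, rfl, hpr⟩ := exists_isPath_of_mem_layer_succ hr hv
  refine ⟨p, hp, fun j => ⟨hpr j, ?_⟩⟩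
  induction j with
  | zero => exact hv'
  | succ j ih => exact fun h => ih ((hp j).mem_layer (mem_runDAG_of_mem_layer (hpr j)) h)

theorem mem_layer_succ_of_mem_acc (hr : Odd r) (hv : v ∈ M.layer w r) (hacc : v.2 ∈ M.acc) :
    v ∈ M.layer w (r + 1) := by
  rw [layer_succ_of_odd hr]
  exact ⟨hv, v, hv, hacc, .refl⟩

/-- The nonaccepting states on level `n` of stage `r` of the filtration. -/
def rejectingLevel (M : NBW Q A) (w : ℕ → A) (r n : ℕ) : Set Q :=
  {l ∈ M.accᶜ | (n, l) ∈ M.layer w r}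

theorem rejectingLevel_antitone (n : ℕ) : Antitone fun r => M.rejectingLevel w r n :=
  fun _ _ h _ hl => ⟨hl.1, layer_antitone h hl.2⟩

theorem eventually_rejectingLevel_ssubset (hw : w ∉ M.Lang) (hr : Even r)
    (hne : (M.layer w (r + 1)).Nonempty) :
    ∃ N, ∀ n ≥ N, M.rejectingLevel w (r + 2) n ⊂ M.rejectingLevel w r n := by
  obtain ⟨p, hp, hpr⟩ := exists_isPath_disjoint_layer hw hr hne
  refine ⟨(p 0).1, fun n hn => ?_⟩
  obtain ⟨j, rfl⟩ := Nat.exists_eq_add_of_le hn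
  rw [← hp.fst_eq j]
  obtain ⟨hmem, hnotMem⟩ := hpr j
  exact Set.ssubset_iff_exists.2 ⟨rejectingLevel_antitone _ (r.le_add_right 2), (p j).2,
    ⟨fun h => hnotMem (mem_layer_succ_of_mem_acc hr.add_one hmem h),
      layer_antitone r.le_succ hmem⟩, fun h => hnotMem h.2⟩

theorem exists_ncard_rejectingLevel_le (hfin : M.accᶜ.Finite) (hw : w ∉ M.Lang) (i : ℕ) :
    ∃ N, ∀ n ≥ N, (M.rejectingLevel w (2 * i) n).ncard ≤ M.accᶜ.ncard - i := by
  induction i with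
  | zero => exact ⟨0, fun n _ => Set.ncard_le_ncard (fun l hl => hl.1) hfin⟩
  | succ i ih =>
    obtain ⟨N, hN⟩ := ih
    rcases (M.layer w (2 * i + 1)).eq_empty_or_nonempty with hempty | hne
    · refine ⟨0, fun n _ => ?_⟩
      have : M.rejectingLevel w (2 * (i + 1)) n = ∅ :=
        Set.eq_empty_of_forall_notMem fun l hl =>
          (hempty ▸ layer_antitone (2 * i + 1).le_succ hl.2 : (n, l) ∈ (∅ : Set (ℕ × Q)))
      simp [this]
    · obtain ⟨N', hN'⟩ := eventually_rejectingLevel_ssubset hw (even_two_mul i) hne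
      refine ⟨max N N', fun n hn => ?_⟩
      have hlt := Set.ncard_lt_ncard (hN' n (le_of_max_le_right hn)) (hfin.subset fun l hl => hl.1)
      have hle := hN n (le_of_max_le_left hn)
      rw [mul_add_one]
      omega

theorem layer_eq_empty (hfin : M.accᶜ.Finite) (hw : w ∉ M.Lang) :
    M.layer w (2 * M.accᶜ.ncard + 1) = ∅ := by
  refine Set.eq_empty_of_forall_notMem fun v hv => ?_
  rw [layer_succ_of_even (even_two_mul _)] at hv
  obtain ⟨p, hp, rfl, hpr⟩ := hv
  obtain ⟨N, hN⟩ := exists_ncard_rejectingLevel_le hfin hw M.accᶜ.ncard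
  have hempty : ∀ n ≥ N, M.rejectingLevel w (2 * M.accᶜ.ncard) n = ∅ := fun n hn =>
    (Set.ncard_eq_zero (hfin.subset fun l hl => hl.1)).1 (by simpa using hN n hn)
  refine hw (mem_lang_of_isPath hp (mem_runDAG_of_mem_layer (hpr 0))
    fun n => ⟨max n N, le_max_left n N, ?_⟩)
  by_contra hacc
  have hN' : N ≤ (p (max n N)).1 := by
    rw [hp.fst_eq]
    exact le_add_left (le_max_right n N)
  exact Set.eq_empty_iff_forall_notMem.1 (hempty _ hN') _ ⟨hacc, hpr _⟩

end Filtration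

section OddRanking

/-- An odd ranking of the run DAG with values at most `k`, in the sense of Kupferman and Vardi.
They ask for every path to be trapped in an odd rank; since ranks do not increase along paths, this
amounts to no path having even ranks only. -/
structure IsOddRanking (M : NBW Q A) (w : ℕ → A) (k : ℕ) (f : ℕ × Q → ℕ) : Prop where
  le : ∀ v ∈ M.runDAG w, f v ≤ k
  even_of_acc : ∀ v ∈ M.runDAG w, v.2 ∈ M.acc → Even (f v)
  le_of_edge : ∀ v ∈ M.runDAG w, ∀ v', M.Edge w v v' → f v' ≤ f v
  exists_odd : ∀ p, M.IsPath w p → p 0 ∈ M.runDAG w → ∃ j, Odd (f (p j))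

/-- The stage of the filtration at which a vertex is deleted, with junk value `0` for a vertex that
is never deleted. -/
noncomputable def rank (M : NBW Q A) (w : ℕ → A) (v : ℕ × Q) : ℕ :=
  sInf {r | v ∉ M.layer w (r + 1)}

variable {v : ℕ × Q} {k : ℕ}

theorem mem_layer_rank (hv : v ∈ M.runDAG w) : v ∈ M.layer w (M.rank w v) := by
  cases h : M.rank w v with
  | zero => exact hv
  | succ r => exact not_not.1 (Nat.notMem_of_lt_sInf (h ▸ r.lt_succ_self : r < M.rank w v))

theorem rank_le (hv : v ∉ M.layer w (k + 1)) : M.rank w v ≤ k :=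
  Nat.sInf_le hv

theorem notMem_layer_rank_succ (hempty : M.layer w (k + 1) = ∅) (v : ℕ × Q) :
    v ∉ M.layer w (M.rank w v + 1) :=
  Nat.sInf_mem (s := {r | v ∉ M.layer w (r + 1)}) ⟨k, by simp [hempty]⟩

theorem isOddRanking_rank (hempty : M.layer w (k + 1) = ∅) :
    M.IsOddRanking w k (M.rank w) := by
  have hdel := notMem_layer_rank_succ hempty
  have le_of_edge : ∀ v ∈ M.runDAG w, ∀ v', M.Edge w v v' → M.rank w v' ≤ M.rank w v :=
    fun v hv v' he => rank_le fun h => hdel v (he.mem_layer hv h)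
  refine ⟨fun v _ => rank_le (by simp [hempty]), fun v hv hacc => ?_, le_of_edge,
    fun p hp h0 => ?_⟩
  · by_contra hodd
    exact hdel v (mem_layer_succ_of_mem_acc (Nat.not_even_iff_odd.1 hodd) (mem_layer_rank hv) hacc)
  · by_contra! heven
    simp only [Nat.not_odd_iff_even] at heven
    have hreach := hp.mem_runDAG h0
    obtain ⟨N, hN⟩ := WellFoundedLT.antitone_chain_condition <|
      antitone_nat_of_succ_le (f := fun j => M.rank w (p j)) fun j =>
        le_of_edge _ (hreach j) _ (hp j)
    have hstay : ∀ j, p (N + j) ∈ M.layer w (M.rank w (p N)) := fun j =>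
      hN (N + j) (N.le_add_right j) ▸ mem_layer_rank (hreach (N + j))
    exact hdel (p N) ((hp.shift N).mem_layer_succ (heven N) hstay 0)

theorem exists_isOddRanking (hfin : M.accᶜ.Finite) (hw : w ∉ M.Lang) :
    ∃ f, M.IsOddRanking w (2 * M.accᶜ.ncard) f :=
  ⟨M.rank w, isOddRanking_rank (layer_eq_empty hfin hw)⟩

end OddRanking

end NBW

namespace KVMH

variable {Q A : Type*} {M : NBW Q A} {w : ℕ → A}

section Completeness

variable {f : ℕ × Q → ℕ} {k i : ℕ} {T T' : Set Q}

/-- The states in `T`, seen at level `i` of the run DAG and paired with their ranks under `f`. -/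
def rankedSet (f : ℕ × Q → ℕ) (i : ℕ) (T : Set Q) : Set (Q × ℕ) := (fun l => (l, f (i, l))) '' T

/-- The states at level `i` that still owe a visit to an odd rank: those reached by paths that have
had even ranks only since the last breakpoint. They are the second component of
`KVMH.rankedRun`. -/
def pending (M : NBW Q A) (w : ℕ → A) (f : ℕ × Q → ℕ) : ℕ → Set Q
  | 0 => ∅
  | i + 1 => {l ∈ M.level w (i + 1) | Even (f (i + 1, l)) ∧
      (pending M w f i = ∅ ∨ ∃ l₀ ∈ pending M w f i, l ∈ M.delta l₀ (w i))}

/-- The run of `KVMH M k` on `w` induced by a ranking `f` of the run DAG. Its first state carries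
the rank of the initial state of `M` rather than `k`. -/
def rankedRun (M : NBW Q A) (w : ℕ → A) (f : ℕ × Q → ℕ) (i : ℕ) :
    Set (Q × ℕ) × Set (Q × ℕ) :=
  (rankedSet f i (M.level w i), rankedSet f i (pending M w f i))

theorem pending_subset_level (i : ℕ) : pending M w f i ⊆ M.level w i := by
  cases i with
  | zero => exact Set.empty_subset _
  | succ i => exact fun l hl => hl.1

theorem even_of_mem_pending {l : Q} (hl : l ∈ pending M w f i) : Even (f (i, l)) := by
  cases i with
  | zero => exact hl.elim
  | succ i => exact hl.2.1

theorem evenPart_rankedSet (f : ℕ × Q → ℕ) (i : ℕ) (T : Set Q) :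
    evenPart (rankedSet f i T) = rankedSet f i {l ∈ T | Even (f (i, l))} := by
  ext ⟨l, n⟩
  simp only [evenPart, rankedSet, Set.mem_ofPred_eq, Set.mem_image, Prod.mk.injEq]
  grind

theorem rankedSet_mem_Qk (hf : M.IsOddRanking w k f) : rankedSet f i (M.level w i) ∈ Qk M k := by
  rintro _ ⟨l, hl, rfl⟩
  exact ⟨hf.le (i, l) hl, hf.even_of_acc (i, l) hl⟩

theorem kvStep_rankedSet (hf : M.IsOddRanking w k f) (hT : T ⊆ M.level w i)
    (hT' : ∀ l ∈ T, M.delta l (w i) ⊆ T') :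
    kvStep M (w i) (rankedSet f i T) (rankedSet f (i + 1) T') := by
  rintro _ ⟨l, hl, rfl⟩ l' hl'
  exact ⟨_, hf.le_of_edge (i, l) (hT hl) (i + 1, l') ⟨rfl, hl'⟩, l', hT' l hl hl', rfl⟩

theorem rankedRun_succ_mem_delta (hf : M.IsOddRanking w k f) (i : ℕ) :
    rankedRun M w f (i + 1) ∈ (KVMH M k).delta (rankedRun M w f i) (w i) := by
  have delta_subset_level : ∀ l ∈ M.level w i, M.delta l (w i) ⊆ M.level w (i + 1) :=
    fun l hl => Set.subset_biUnion_of_mem (u := fun l => M.delta l (w i)) hl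
  have hempty : (rankedRun M w f i).2 = ∅ ↔ pending M w f i = ∅ := Set.image_eq_empty
  refine mem_delta_iff.2 ⟨rankedSet_mem_Qk hf, kvStep_rankedSet hf subset_rfl delta_subset_level,
    fun h => ?_, fun h => ?_⟩
  · rw [hempty] at h
    simp only [rankedRun, evenPart_rankedSet, pending, h, true_or, and_true]
  · rw [Ne, hempty] at h
    refine ⟨rankedSet f (i + 1)
      {l ∈ M.level w (i + 1) | ∃ l₀ ∈ pending M w f i, l ∈ M.delta l₀ (w i)},
      Set.image_mono fun l hl => hl.1, kvStep_rankedSet hf (pending_subset_level i)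
        fun l hl l' hl' => ⟨delta_subset_level l (pending_subset_level i hl) hl', l, hl, hl'⟩, ?_⟩
    rw [evenPart_rankedSet]
    simp only [rankedRun, pending, h, false_or, Set.mem_ofPred_eq, and_assoc,
      and_comm (a := Even _)]

theorem exists_pending_eq_empty (hf : M.IsOddRanking w k f)
    (hδ : ∀ l σ, (M.delta l σ).Finite) (n : ℕ) : ∃ i ≥ n, pending M w f i = ∅ := by
  by_contra! hne
  obtain ⟨p, hp⟩ := exists_seq_of_finite_layers (r := M.Edge w)
    (s := fun j => Prod.mk (n + j) '' pending M w f (n + j))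
    (fun j => ((NBW.level_finite hδ _).subset (pending_subset_level _)).image _)
    (fun j => (hne (n + j) (n.le_add_right j)).image _) (by
      rintro j _ ⟨l', hl', rfl⟩
      obtain ⟨l, hl, hll'⟩ := hl'.2.2.resolve_left (hne (n + j) (n.le_add_right j)).ne_empty
      exact ⟨_, ⟨l, hl, rfl⟩, rfl, hll'⟩)
  have hpending : ∀ j, p j ∈ M.runDAG w ∧ Even (f (p j)) := by
    intro j
    obtain ⟨l, hl, hlp⟩ := (hp j).1
    rw [← hlp]
    exact ⟨pending_subset_level _ hl, even_of_mem_pending hl⟩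
  obtain ⟨j, hj⟩ := hf.exists_odd p (fun j => (hp j).2) (hpending 0).1
  exact Nat.not_even_iff_odd.2 hj (hpending j).2

theorem mem_lang_of_isOddRanking (hf : M.IsOddRanking w k f)
    (hδ : ∀ l σ, (M.delta l σ).Finite) : w ∈ (KVMH M k).Lang := by
  have hstart : rankedRun M w f 0 = ({(M.init, f (0, M.init))}, ∅) :=
    Prod.ext (Set.image_singleton ..) (Set.image_empty _)
  refine NBW.mem_lang_of_delta_subset (rankedRun_succ_mem_delta hf) ?_ fun n => ?_
  · rw [hstart]
    exact delta_subset_of_univLe (univLe_init_singleton (hf.le (0, M.init) rfl)) _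
  · obtain ⟨i, hi, hempty⟩ := exists_pending_eq_empty hf hδ n
    exact ⟨i, hi, Set.image_eq_empty.2 hempty⟩

end Completeness

end KVMH

theorem kvmh_correct_general {Q A : Type*} (M : NBW Q A) (hfin : M.accᶜ.Finite)
    (hδ : ∀ l σ, (M.delta l σ).Finite) :
    (∀ k' k : ℕ, k' ≤ k → (KVMH M k').Lang ⊆ (KVMH M k).Lang) ∧
    ∀ k ≥ 2 * M.accᶜ.ncard, (KVMH M k).Lang = M.Langᶜ := by
  refine ⟨fun _ _ => KVMH.lang_mono M, fun k hk => (KVMH.lang_subset_compl M k).antisymm ?_⟩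
  intro w hw
  obtain ⟨f, hf⟩ := NBW.exists_isOddRanking hfin hw
  exact KVMH.lang_mono M hk (KVMH.mem_lang_of_isOddRanking hf hδ)

/-- For every NBW `A` and even `k' ≤ k`, `L(KVMH(A,k')) ⊆ L(KVMH(A,k))`; moreover for
`k = 2(|L| - |α|)`, `L(KVMH(A,k)) = Σ^ω \ L(A)`. -/
theorem kvmh_correct {Q A : Type*} [Fintype Q] [Fintype A] (M : NBW Q A) :
    (∀ k' k : ℕ, Even k' → Even k → k' ≤ k → (KVMH M k').Lang ⊆ (KVMH M k).Lang) ∧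
    (KVMH M (2 * (Fintype.card Q - M.acc.ncard))).Lang = M.Langᶜ := by
  obtain ⟨hmono, hcompl⟩ := kvmh_correct_general M (Set.toFinite _) fun _ _ => Set.toFinite _
  refine ⟨fun k' k _ _ => hmono k' k, hcompl _ ?_⟩
  rw [Set.ncard_compl, Nat.card_eq_fintype_card]
end

section
/- Let A = ⟨L, ι, Σ, δ, α⟩ be a nondeterministic Büchi automaton and let ≼ be a pre-order on L. Then ≼ is a simulation for A if and only if both of the following hold: (a) the set α is ≼-closed, and (b) for every ≼-closed set S ⊆ L and every σ ∈ Σ, the set Pre_σ(S) is ≼-closed. -/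
theorem rClosed_setOf_rel {Q : Type*} (r : Q → Q → Prop) [IsTrans Q r] (a : Q) :
    RClosed r {l | r l a} :=
  fun _ _ hle ha => trans hle ha

namespace NBW

variable {Q A : Type*} {M : NBW Q A} {r : Q → Q → Prop} {σ : A}

/-- Clause (i) of the definition of a simulation, for the single letter `σ`: every `σ`-step of a
state is matched by a `σ`-step of each state below it. -/
def MatchesSteps (M : NBW Q A) (r : Q → Q → Prop) (σ : A) : Prop :=
  ∀ ⦃l₁ l₂ l₃ : Q⦄, r l₃ l₁ → l₂ ∈ M.delta l₁ σ → ∃ l₄, r l₄ l₂ ∧ l₄ ∈ M.delta l₃ σ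

theorem simulation_iff_rClosed_acc_and_matchesSteps :
    M.Simulation r ↔ RClosed r M.acc ∧ ∀ σ, M.MatchesSteps r σ where
  mp := fun ⟨hsteps, hacc⟩ =>
    ⟨fun l' l hle hl => hacc l hl l' hle, fun σ l₁ l₂ l₃ => hsteps l₁ l₂ l₃ σ⟩
  mpr := fun ⟨hacc, hsteps⟩ =>
    ⟨fun _ _ _ σ hle hδ => hsteps σ hle hδ, fun l hl l' hle => hacc l' l hle hl⟩

theorem MatchesSteps.rClosed_preSigma (hσ : M.MatchesSteps r σ) {S : Set Q} (hS : RClosed r S) :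
    RClosed r (M.PreSigma σ S) := by
  rintro l₃ l₁ hle ⟨l₂, hl₂, hδ⟩
  obtain ⟨l₄, hle', hδ'⟩ := hσ hle hδ
  exact ⟨l₄, hS l₄ l₂ hle' hl₂, hδ'⟩

theorem matchesSteps_of_rClosed_preSigma_setOf_rel [Std.Refl r]
    (hpre : ∀ a, RClosed r (M.PreSigma σ {l | r l a})) : M.MatchesSteps r σ := by
  intro l₁ l₂ l₃ hle hδ
  have hl₁ : l₁ ∈ M.PreSigma σ {l | r l l₂} := ⟨l₂, refl l₂, hδ⟩
  exact hpre l₂ l₃ l₁ hle hl₁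

theorem matchesSteps_iff_forall_rClosed_preSigma [IsPreorder Q r] :
    M.MatchesSteps r σ ↔ ∀ S, RClosed r S → RClosed r (M.PreSigma σ S) where
  mp hσ _ hS := hσ.rClosed_preSigma hS
  mpr hpre := matchesSteps_of_rClosed_preSigma_setOf_rel fun a =>
    hpre _ (rClosed_setOf_rel r a)

end NBW

theorem simulation_iff_closed_general {Q A : Type*} (M : NBW Q A) (r : Q → Q → Prop)
    [IsPreorder Q r] :
    M.Simulation r ↔
      (RClosed r M.acc ∧
        ∀ S : Set Q, RClosed r S → ∀ σ : A, RClosed r (M.PreSigma σ S)) := by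
  simp only [NBW.simulation_iff_rClosed_acc_and_matchesSteps,
    NBW.matchesSteps_iff_forall_rClosed_preSigma]
  exact and_congr_right fun _ => ⟨fun h S hS σ => h σ S hS, fun h σ S hS => h S hS σ⟩

/-- A pre-order `≼` is a simulation for the NBW `A` iff (a) `α` is `≼`-closed and
(b) `Pre_σ` preserves `≼`-closedness for every `σ`. -/
theorem simulation_iff_closed {Q A : Type*} [Fintype Q] [Fintype A] (M : NBW Q A)
    (r : Q → Q → Prop) (hrefl : Reflexive r) (htrans : Transitive r) :
    M.Simulation r ↔
      (RClosed r M.acc ∧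
        ∀ S : Set Q, RClosed r S → ∀ σ : A, RClosed r (M.PreSigma σ S)) :=
  have : IsPreorder Q r := { refl := hrefl, trans := fun _ _ _ hab hbc => htrans hab hbc }
  simulation_iff_closed_general M r
end

section
/- Let A = ⟨L, ι, Σ, δ, α⟩ be a nondeterministic Büchi automaton and let ≼ be a simulation for A. Then for every ≼-closed set Y ⊆ L, the least fixed point μ x · (Pre(x) ∪ (Pre(Y) ∩ α)) is ≼-closed, and the set F_A = ν y · μ x · (Pre(x) ∪ (Pre(y) ∩ α)) is ≼-closed. -/
/-- `Pre` as an order-homomorphism on the powerset lattice. -/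
def preHom {Q A : Type*} (M : NBW Q A) : Set Q →o Set Q :=
  ⟨M.Pre, by rintro S T hST l ⟨σ, l', hl', hd⟩; exact ⟨σ, l', hST hl', hd⟩⟩

/-- The map `x ↦ Pre(x) ∪ (Pre(Y) ∩ α)`. -/
def innerHom {Q A : Type*} (M : NBW Q A) (Y : Set Q) : Set Q →o Set Q :=
  ⟨fun X => M.Pre X ∪ (M.Pre Y ∩ M.acc), by
    intro S T hST
    exact Set.union_subset_union_left _ ((preHom M).mono hST)⟩

/-- The map `y ↦ μ x · (Pre(x) ∪ (Pre(y) ∩ α))`. -/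
def outerHom {Q A : Type*} (M : NBW Q A) : Set Q →o Set Q :=
  ⟨fun Y => OrderHom.lfp (innerHom M Y), by
    intro Y Y' hY
    apply OrderHom.lfp.mono
    intro X
    exact Set.union_subset_union_right _
      (Set.inter_subset_inter_left _ ((preHom M).mono hY))⟩

/-- `F_A = ν y · μ x · (Pre(x) ∪ (Pre(y) ∩ α))`. -/
def NBW.FixF {Q A : Type*} (M : NBW Q A) : Set Q :=
  OrderHom.gfp (outerHom M)

namespace RClosed

variable {Q : Type*} {r : Q → Q → Prop}

theorem union {S T : Set Q} (hS : RClosed r S) (hT : RClosed r T) : RClosed r (S ∪ T) :=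
  fun l₁ l₂ hr => Or.imp (hS l₁ l₂ hr) (hT l₁ l₂ hr)

theorem inter {S T : Set Q} (hS : RClosed r S) (hT : RClosed r T) : RClosed r (S ∩ T) :=
  fun l₁ l₂ hr => And.imp (hS l₁ l₂ hr) (hT l₁ l₂ hr)

theorem sUnion {𝒮 : Set (Set Q)} (h : ∀ S ∈ 𝒮, RClosed r S) : RClosed r (⋃₀ 𝒮) := by
  rintro l₁ l₂ hr ⟨S, hS, hl₂⟩
  exact ⟨S, hS, h S hS l₁ l₂ hr hl₂⟩

theorem sInter {𝒮 : Set (Set Q)} (h : ∀ S ∈ 𝒮, RClosed r S) : RClosed r (⋂₀ 𝒮) :=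
  fun l₁ l₂ hr hl₂ S hS => h S hS l₁ l₂ hr (hl₂ S hS)

theorem lfp {f : Set Q →o Set Q} (hf : ∀ S, RClosed r S → RClosed r (f S)) :
    RClosed r (OrderHom.lfp f) :=
  f.lfp_induction (fun S hS _ => hf S hS) fun _ => sUnion

theorem gfp {f : Set Q →o Set Q} (hf : ∀ S, RClosed r S → RClosed r (f S)) :
    RClosed r (OrderHom.gfp f) :=
  f.gfp_induction (fun S hS _ => hf S hS) fun _ => sInter

end RClosed

namespace NBW.Simulation

variable {Q A : Type*} {M : NBW Q A} {r : Q → Q → Prop}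

theorem rClosed_acc (hsim : M.Simulation r) : RClosed r M.acc :=
  fun l₁ l₂ hr hl₂ => hsim.2 l₂ hl₂ l₁ hr

theorem rClosed_pre (hsim : M.Simulation r) {S : Set Q} (hS : RClosed r S) :
    RClosed r (M.Pre S) := by
  rintro l₁ l₂ hr ⟨σ, l₂', hl₂', hstep⟩
  obtain ⟨l₁', hr', hstep'⟩ := hsim.1 l₂ l₂' l₁ σ hr hstep
  exact ⟨σ, l₁', hS l₁' l₂' hr' hl₂', hstep'⟩

theorem rClosed_innerHom (hsim : M.Simulation r) {X Y : Set Q} (hX : RClosed r X)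
    (hY : RClosed r Y) : RClosed r (innerHom M Y X) :=
  (hsim.rClosed_pre hX).union ((hsim.rClosed_pre hY).inter hsim.rClosed_acc)

theorem rClosed_lfp_innerHom (hsim : M.Simulation r) {Y : Set Q} (hY : RClosed r Y) :
    RClosed r (OrderHom.lfp (innerHom M Y)) :=
  RClosed.lfp fun _ hX => hsim.rClosed_innerHom hX hY

theorem rClosed_fixF (hsim : M.Simulation r) : RClosed r M.FixF :=
  RClosed.gfp fun _ hY => hsim.rClosed_lfp_innerHom hY

end NBW.Simulation

theorem fixpoints_closed_general {Q A : Type*} {M : NBW Q A} {r : Q → Q → Prop}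
    (hsim : M.Simulation r) :
    (∀ Y : Set Q, RClosed r Y → RClosed r (OrderHom.lfp (innerHom M Y))) ∧
    RClosed r M.FixF :=
  ⟨fun _ hY => hsim.rClosed_lfp_innerHom hY, hsim.rClosed_fixF⟩

/-- If `≼` is a simulation for `A`, then for every `≼`-closed `Y` the least fixed point
`μ x · (Pre(x) ∪ (Pre(Y) ∩ α))` is `≼`-closed, and `F_A = ν y · μ x · (Pre(x) ∪ (Pre(y) ∩ α))`
is `≼`-closed. -/
theorem fixpoints_closed {Q A : Type*} [Fintype Q] [Fintype A] (M : NBW Q A)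
    (r : Q → Q → Prop) (hrefl : Reflexive r) (htrans : Transitive r)
    (hsim : M.Simulation r) :
    (∀ Y : Set Q, RClosed r Y → RClosed r (OrderHom.lfp (innerHom M Y))) ∧
    RClosed r M.FixF :=
  fixpoints_closed_general hsim
end

section
/- For every nondeterministic Büchi automaton A = ⟨L, ι, Σ, δ, α⟩, L(A) ≠ ∅ if and only if ι ∈ F_A, where F_A = ν y · μ x · (Pre(x) ∪ (Pre(y) ∩ α)). -/
universe u

theorem exists_seq_of_forall_mem_exists_mem {α : Type*} {r : α → α → Prop} {s : Set α}
    (h : ∀ a ∈ s, ∃ b ∈ s, r a b) {a : α} (ha : a ∈ s) :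
    ∃ u : ℕ → α, u 0 = a ∧ ∀ n, r (u n) (u (n + 1)) := by
  have : Nonempty α := ⟨a⟩
  choose! next hmaps hrel using h
  refine ⟨fun n ↦ next^[n] a, rfl, fun n ↦ ?_⟩
  simp only [Function.iterate_succ_apply']
  exact hrel _ (Set.MapsTo.iterate hmaps n ha)

theorem frequently_atTop_of_forall_not_imp_lt {α : Type*} [LT α] [WellFoundedLT α] (u : ℕ → α)
    {p : ℕ → Prop} (h : ∀ n, ¬p n → u (n + 1) < u n) : ∃ᶠ n in Filter.atTop, p n := by
  refine Filter.frequently_atTop.2 fun n ↦ ?_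
  obtain ⟨k, hk⟩ := WellFounded.not_rel_apply_succ (r := (· < ·)) fun k ↦ u (n + k)
  exact ⟨n + k, Nat.le_add_right n k, by_contra fun hp ↦ hk (h (n + k) hp)⟩

theorem mem_lfpApprox_bot {α : Type u} (f : Set α →o Set α) {a : α} {o : Ordinal.{u}} :
    a ∈ OrdinalApprox.lfpApprox f ⊥ o ↔ ∃ o' < o, a ∈ f (OrdinalApprox.lfpApprox f ⊥ o') := by
  rw [OrdinalApprox.lfpApprox]
  simp

theorem exists_ordinal_rank_lfp {α : Type u} (f : Set α →o Set α) :
    ∃ rank : α → Ordinal.{u}, ∀ a ∈ f.lfp, a ∈ f {b ∈ f.lfp | rank b < rank a} := by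
  let stage := OrdinalApprox.lfpApprox f ⊥
  let rank (a : α) : Ordinal.{u} := sInf {o | a ∈ stage o}
  have stage_le_lfp (o : Ordinal.{u}) : stage o ≤ f.lfp :=
    OrdinalApprox.lfpApprox_le_of_mem_fixedPoints f f.isFixedPt_lfp bot_le o
  have rank_le {b : α} {o : Ordinal.{u}} (hb : b ∈ stage o) : rank b ≤ o := csInf_le' hb
  refine ⟨rank, fun a ha ↦ ?_⟩
  have mem_stage_rank : a ∈ stage (rank a) := by
    obtain ⟨o, ho⟩ := OrdinalApprox.lfp_mem_range_lfpApprox f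
    rw [← ho] at ha
    exact csInf_mem (s := {o | a ∈ stage o}) ⟨o, ha⟩
  obtain ⟨o, ho, hao⟩ := (mem_lfpApprox_bot f).1 mem_stage_rank
  have stage_subset : stage o ⊆ {b ∈ f.lfp | rank b < rank a} :=
    fun b hb ↦ ⟨stage_le_lfp o hb, (rank_le hb).trans_lt ho⟩
  exact f.mono stage_subset hao

namespace NBW

variable {Q : Type u} {A : Type*} {M : NBW Q A}

/-- An infinite path of `M` labelled by the word `w` that visits accepting states infinitely often:
an accepting run, except that it may start in any state, which lets all of `F_A` be described. -/
structure IsAcceptingPath (M : NBW Q A) (w : ℕ → A) (ρ : ℕ → Q) : Prop where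
  step : ∀ i, ρ (i + 1) ∈ M.delta (ρ i) (w i)
  frequently_acc : ∃ᶠ i in Filter.atTop, ρ i ∈ M.acc

/-- A Büchi progress measure on the set of states `S`: every state of `S` has a successor in `S`,
of smaller rank unless the state is accepting. For well-founded ranks it certifies that accepting
paths start everywhere in `S`. -/
def IsProgressMeasure {α : Type*} [LT α] (M : NBW Q A) (S : Set Q) (rank : Q → α) : Prop :=
  ∀ l ∈ S, l ∈ M.Pre {l' ∈ S | l ∉ M.acc → rank l' < rank l}

theorem nonempty_lang_iff_exists_isAcceptingPath :
    M.Lang.Nonempty ↔ ∃ w ρ, M.IsAcceptingPath w ρ ∧ ρ 0 = M.init := by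
  constructor
  · rintro ⟨w, ρ, ⟨hinit, hstep⟩, hacc⟩
    exact ⟨w, ρ, ⟨hstep, Filter.frequently_atTop.2 hacc⟩, hinit⟩
  · rintro ⟨w, ρ, hρ, hinit⟩
    exact ⟨w, ρ, ⟨hinit, hρ.step⟩, Filter.frequently_atTop.1 hρ.frequently_acc⟩

theorem lfp_innerHom_fixF (M : NBW Q A) : (innerHom M M.FixF).lfp = M.FixF :=
  (outerHom M).map_gfp

theorem mem_lfp_innerHom_of_path {Y : Set Q} {w : ℕ → A} {ρ : ℕ → Q} {m n : ℕ}
    (hstep : ∀ i < n, ρ (i + 1) ∈ M.delta (ρ i) (w i)) (hmn : m ≤ n)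
    (hn : ρ n ∈ M.Pre Y ∩ M.acc) : ρ m ∈ (innerHom M Y).lfp := by
  induction hmn using Nat.decreasingInduction with
  | self =>
    rw [← OrderHom.map_lfp]
    exact Or.inr hn
  | of_succ i hi ih =>
    rw [← OrderHom.map_lfp]
    exact Or.inl ⟨w i, ρ (i + 1), ih, hstep i hi⟩

theorem IsAcceptingPath.range_subset_fixF {w : ℕ → A} {ρ : ℕ → Q}
    (h : M.IsAcceptingPath w ρ) : Set.range ρ ⊆ M.FixF := by
  refine OrderHom.le_gfp _ (Set.range_subset_iff.2 fun m ↦ ?_)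
  obtain ⟨n, hmn, hacc⟩ := Filter.frequently_atTop.1 h.frequently_acc m
  exact mem_lfp_innerHom_of_path (fun i _ ↦ h.step i) hmn
    ⟨⟨w n, ρ (n + 1), Set.mem_range_self _, h.step n⟩, hacc⟩

theorem exists_isProgressMeasure_fixF (M : NBW Q A) :
    ∃ rank : Q → Ordinal.{u}, M.IsProgressMeasure M.FixF rank := by
  obtain ⟨rank, hrank⟩ := exists_ordinal_rank_lfp (innerHom M M.FixF)
  rw [lfp_innerHom_fixF] at hrank
  refine ⟨rank, fun l hl ↦ ?_⟩
  rcases hrank l hl with ⟨σ, l', ⟨hl', hlt⟩, hδ⟩ | ⟨⟨σ, l', hl', hδ⟩, hacc⟩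
  · exact ⟨σ, l', ⟨hl', fun _ ↦ hlt⟩, hδ⟩
  · exact ⟨σ, l', ⟨hl', fun hnacc ↦ absurd hacc hnacc⟩, hδ⟩

theorem IsProgressMeasure.exists_isAcceptingPath {α : Type*} [LT α] [WellFoundedLT α] {S : Set Q}
    {rank : Q → α} (h : M.IsProgressMeasure S rank) {l : Q} (hl : l ∈ S) :
    ∃ w ρ, M.IsAcceptingPath w ρ ∧ ρ 0 = l := by
  have hsucc : ∀ l ∈ S, ∃ l' ∈ S,
      (∃ σ, l' ∈ M.delta l σ) ∧ (l ∉ M.acc → rank l' < rank l) := by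
    intro l hl
    obtain ⟨σ, l', ⟨hl', hrank⟩, hδ⟩ := h l hl
    exact ⟨l', hl', ⟨σ, hδ⟩, hrank⟩
  obtain ⟨ρ, hρ, hrel⟩ := exists_seq_of_forall_mem_exists_mem hsucc hl
  choose hstep hrank using hrel
  choose w hw using hstep
  exact ⟨w, ρ, ⟨hw, frequently_atTop_of_forall_not_imp_lt (rank ∘ ρ) hrank⟩, hρ⟩

theorem mem_fixF_iff_exists_isAcceptingPath {l : Q} :
    l ∈ M.FixF ↔ ∃ w ρ, M.IsAcceptingPath w ρ ∧ ρ 0 = l := by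
  constructor
  · intro hl
    obtain ⟨rank, hrank⟩ := M.exists_isProgressMeasure_fixF
    exact hrank.exists_isAcceptingPath hl
  · rintro ⟨w, ρ, hρ, rfl⟩
    exact hρ.range_subset_fixF (Set.mem_range_self 0)

end NBW

theorem lang_nonempty_iff_fix_general {Q A : Type*} (M : NBW Q A) :
    M.Lang ≠ ∅ ↔ M.init ∈ M.FixF := by
  rw [← Set.nonempty_iff_ne_empty, NBW.nonempty_lang_iff_exists_isAcceptingPath,
    NBW.mem_fixF_iff_exists_isAcceptingPath]

/-- `L(A) ≠ ∅` iff `ι ∈ F_A` where `F_A = ν y · μ x · (Pre(x) ∪ (Pre(y) ∩ α))`. -/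
theorem lang_nonempty_iff_fix {Q A : Type*} [Fintype Q] [Fintype A] (M : NBW Q A) :
    M.Lang ≠ ∅ ↔ M.init ∈ M.FixF :=
  lang_nonempty_iff_fix_general M
end

section
/- For every alternating Büchi automaton A₁ = ⟨L₁, ι₁, Σ, δ₁, α₁⟩, the partial order ≼_alt is a simulation for the nondeterministic Büchi automaton MH(A₁). -/
/-- The partial order `≼_alt`: `⟨s,o⟩ ≼ ⟨s',o'⟩` iff `s ⊆ s'`, `o ⊆ o'`, `o = ∅ ↔ o' = ∅`. -/
def altLe {Q : Type*} (p q : Set Q × Set Q) : Prop :=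
  p.1 ⊆ q.1 ∧ p.2 ⊆ q.2 ∧ (p.2 = ∅ ↔ q.2 = ∅)

/-- `≼_alt`-downward closure `↓S`. -/
def altDown {Q : Type*} (S : Set (Set Q × Set Q)) : Set (Set Q × Set Q) :=
  {p | ∃ q ∈ S, altLe p q}

/-!
Shrinking the two sets of a macro-state removes constraints on its successors, and `altLe`
preserves emptiness of the second set, so both macro-states use the same case of the transition
function. Hence every successor of the larger macro-state is itself a successor of the smaller one.
-/

theorem NBW.Simulation.of_delta_subset {Q A : Type*} {M : NBW Q A} {r : Q → Q → Prop} [Std.Refl r]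
    (hdelta : ∀ p q σ, r p q → M.delta q σ ⊆ M.delta p σ) (hacc : RClosed r M.acc) :
    M.Simulation r :=
  ⟨fun q q' p σ hpq hq' => ⟨q', refl q', hdelta p q σ hpq hq'⟩,
    fun q hq p hpq => hacc p q hpq hq⟩

instance instReflAltLe {Q : Type*} : Std.Refl (altLe (Q := Q)) :=
  ⟨fun _ => ⟨subset_rfl, subset_rfl, Iff.rfl⟩⟩

section MiyanoHayashi

variable {Q A : Type*} (M : ABW Q A)

/-- The models of the formula `⋀_{l ∈ s} δ(l, σ)`. The conjunction is encoded by quantifying over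
`s`, which may be infinite. -/
def ABW.models (σ : A) (s : Set Q) : Set (Set Q) :=
  {s' | ∀ l ∈ s, PosBool.Sat s' (M.delta l σ)}

theorem ABW.models_antitone (σ : A) : Antitone (M.models σ) :=
  fun _ _ hst _ hs' l hl => hs' l (hst hl)

namespace MH

theorem delta_of_snd_eq_empty {p : Set Q × Set Q} (hp : p.2 = ∅) (σ : A) :
    (MH M).delta p σ = (fun s' => (s', s' \ M.acc)) '' M.models σ p.1 := by
  ext q
  simp only [MH, if_pos hp, ABW.models, Set.mem_ofPred_eq, Set.mem_image, and_comm, eq_comm]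

theorem delta_of_snd_ne_empty {p : Set Q × Set Q} (hp : p.2 ≠ ∅) (σ : A) :
    (MH M).delta p σ = (fun x : Set Q × Set Q => (x.1, x.2 \ M.acc)) ''
      (M.models σ p.1 ×ˢ M.models σ p.2 ∩ {x | x.2 ⊆ x.1}) := by
  ext q
  simp only [MH, if_neg hp, ABW.models, Set.mem_ofPred_eq, Set.mem_image, Set.mem_inter_iff,
    Set.mem_prod, Prod.exists]
  grind

theorem delta_subset_of_altLe {p q : Set Q × Set Q} (hpq : altLe p q) (σ : A) :
    (MH M).delta q σ ⊆ (MH M).delta p σ := by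
  obtain ⟨hfst, hsnd, hempty⟩ := hpq
  have hmodels_fst := M.models_antitone σ hfst
  have hmodels_snd := M.models_antitone σ hsnd
  by_cases hq : q.2 = ∅
  · rw [delta_of_snd_eq_empty M hq, delta_of_snd_eq_empty M (hempty.mpr hq)]
    exact Set.image_mono hmodels_fst
  · rw [delta_of_snd_ne_empty M hq, delta_of_snd_ne_empty M (mt hempty.mp hq)]
    exact Set.image_mono (Set.inter_subset_inter_left _ (Set.prod_mono hmodels_fst hmodels_snd))

theorem rClosed_altLe_acc : RClosed altLe (MH M).acc :=
  fun _ _ hpq hq => hpq.2.2.mpr hq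

end MH

end MiyanoHayashi

theorem altLe_simulation_general {Q A : Type*} (M : ABW Q A) :
    (MH M).Simulation altLe :=
  .of_delta_subset (fun _ _ σ hpq => MH.delta_subset_of_altLe M hpq σ) (MH.rClosed_altLe_acc M)

/-- For every ABW `A₁`, the partial order `≼_alt` is a simulation for `MH(A₁)`. -/
theorem altLe_simulation {Q A : Type*} [Fintype Q] [Fintype A] (M : ABW Q A) :
    (MH M).Simulation altLe :=
  altLe_simulation_general M
end

section
/- Let L₁ be a finite set and let ≼_alt on 2^{L₁} × 2^{L₁} be defined by ⟨s, o⟩ ≼_alt ⟨s', o'⟩ iff s ⊆ s', o ⊆ o', and (o = ∅ ⟺ o' = ∅). For all pairs ⟨s₁, o₁⟩, ⟨s₂, o₂⟩ ∈ 2^{L₁} × 2^{L₁}: if o₁ ∩ o₂ ≠ ∅ then ↓{⟨s₁, o₁⟩} ∩ ↓{⟨s₂, o₂⟩} = ↓{⟨s₁ ∩ s₂, o₁ ∩ o₂⟩}; if o₁ = o₂ = ∅ then ↓{⟨s₁, o₁⟩} ∩ ↓{⟨s₂, o₂⟩} = ↓{⟨s₁ ∩ s₂, ∅⟩}; and otherwise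 (i.e., if exactly one of o₁, o₂ is empty, or both are nonempty with o₁ ∩ o₂ = ∅) the intersection ↓{⟨s₁, o₁⟩} ∩ ↓{⟨s₂, o₂⟩} is empty. -/
section

variable {Q : Type*} {p q r : Set Q × Set Q}

theorem altLe.trans (hpq : altLe p q) (hqr : altLe q r) : altLe p r :=
  ⟨hpq.1.trans hqr.1, hpq.2.1.trans hqr.2.1, hpq.2.2.trans hqr.2.2⟩

theorem altLe_inf_left (h : q.2 ∩ r.2 = ∅ → q.2 = ∅) : altLe (q ⊓ r) q :=
  ⟨Set.inter_subset_left, Set.inter_subset_left, h, Set.subset_eq_empty Set.inter_subset_left⟩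

theorem altLe_inf_right (h : q.2 ∩ r.2 = ∅ → r.2 = ∅) : altLe (q ⊓ r) r :=
  ⟨Set.inter_subset_right, Set.inter_subset_right, h, Set.subset_eq_empty Set.inter_subset_right⟩

theorem altLe_inf (hpq : altLe p q) (hpr : altLe p r) (hq : altLe (q ⊓ r) q) :
    altLe p (q ⊓ r) :=
  ⟨Set.subset_inter hpq.1 hpr.1, Set.subset_inter hpq.2.1 hpr.2.1, hpq.2.2.trans hq.2.2.symm⟩

theorem altLe.snd_eq_empty_of_inter_eq_empty (hpq : altLe p q) (hpr : altLe p r)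
    (h : q.2 ∩ r.2 = ∅) : q.2 = ∅ ∧ r.2 = ∅ :=
  have hp : p.2 = ∅ := Set.subset_eq_empty (Set.subset_inter hpq.2.1 hpr.2.1) h
  ⟨hpq.2.2.1 hp, hpr.2.2.1 hp⟩

theorem mem_altDown_singleton : p ∈ altDown {q} ↔ altLe p q := by
  simp [altDown]

theorem altDown_singleton_inter_singleton (h : q.2 ∩ r.2 = ∅ → q.2 = ∅ ∧ r.2 = ∅) :
    altDown {q} ∩ altDown {r} = altDown {q ⊓ r} := by
  have hq : altLe (q ⊓ r) q := altLe_inf_left fun hqr => (h hqr).1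
  have hr : altLe (q ⊓ r) r := altLe_inf_right fun hqr => (h hqr).2
  ext p
  simp only [Set.mem_inter_iff, mem_altDown_singleton]
  exact ⟨fun ⟨hpq, hpr⟩ => altLe_inf hpq hpr hq, fun hp => ⟨hp.trans hq, hp.trans hr⟩⟩

theorem altDown_singleton_inter_singleton_eq_empty (h : q.2 ∩ r.2 = ∅)
    (hne : ¬(q.2 = ∅ ∧ r.2 = ∅)) : altDown {q} ∩ altDown {r} = ∅ := by
  refine Set.eq_empty_of_forall_notMem fun p ⟨hpq, hpr⟩ => hne ?_
  rw [mem_altDown_singleton] at hpq hpr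
  exact hpq.snd_eq_empty_of_inter_eq_empty hpr h

end

theorem altDown_inter_general {Q : Type*} (s₁ o₁ s₂ o₂ : Set Q) :
    (o₁ ∩ o₂ ≠ ∅ →
      altDown {(s₁, o₁)} ∩ altDown {(s₂, o₂)} = altDown {(s₁ ∩ s₂, o₁ ∩ o₂)}) ∧
    (o₁ = ∅ ∧ o₂ = ∅ →
      altDown {(s₁, o₁)} ∩ altDown {(s₂, o₂)} = altDown {(s₁ ∩ s₂, (∅ : Set Q))}) ∧
    (o₁ ∩ o₂ = ∅ ∧ ¬(o₁ = ∅ ∧ o₂ = ∅) →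
      altDown {(s₁, o₁)} ∩ altDown {(s₂, o₂)} = ∅) := by
  refine ⟨fun h => ?_, fun ho => ?_, fun ⟨h, hne⟩ => ?_⟩
  · exact altDown_singleton_inter_singleton fun hinter => absurd hinter h
  · calc altDown {(s₁, o₁)} ∩ altDown {(s₂, o₂)}
      _ = altDown {(s₁ ∩ s₂, o₁ ∩ o₂)} := altDown_singleton_inter_singleton fun _ => ho
      _ = altDown {(s₁ ∩ s₂, ∅)} := by rw [ho.1, Set.empty_inter]
  · exact altDown_singleton_inter_singleton_eq_empty h hne

/-- Intersections of `≼_alt`-closures of singletons. -/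
theorem altDown_inter {L₁ : Type*} [Fintype L₁] (s₁ o₁ s₂ o₂ : Set L₁) :
    (o₁ ∩ o₂ ≠ ∅ →
      altDown {(s₁, o₁)} ∩ altDown {(s₂, o₂)} = altDown {(s₁ ∩ s₂, o₁ ∩ o₂)}) ∧
    (o₁ = ∅ ∧ o₂ = ∅ →
      altDown {(s₁, o₁)} ∩ altDown {(s₂, o₂)} = altDown {(s₁ ∩ s₂, (∅ : Set L₁))}) ∧
    (o₁ ∩ o₂ = ∅ ∧ ¬(o₁ = ∅ ∧ o₂ = ∅) →
      altDown {(s₁, o₁)} ∩ altDown {(s₂, o₂)} = ∅) :=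
  altDown_inter_general s₁ o₁ s₂ o₂
end

section
/- For every nondeterministic Büchi automaton A, the pre-order ≼_univ is a simulation for the nondeterministic Büchi automaton KVMH(A). -/
/-!
Transitions of `KVMH` are antitone in their source. Each pair `(l, n)` of the smaller state is
dominated by a pair `(l, m)` with `m ≤ n` of the larger one, so the rank bounds which the larger
state imposes on a successor imply those imposed by the smaller. Since related states also agree on
whether the second component is empty, both use the same transition clause. Hence a successor of the
larger state is itself a successor of the smaller one, and it simulates itself by reflexivity.
-/

theorem NBW.Simulation.of_delta_antitone {Q A : Type*} {M : NBW Q A} {r : Q → Q → Prop}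
    (refl : ∀ l, r l l) (delta_antitone : ∀ l l' σ, r l l' → M.delta l' σ ⊆ M.delta l σ)
    (acc_closed : RClosed r M.acc) : M.Simulation r :=
  ⟨fun l₁ l₂ l₃ σ hle hl₂ => ⟨l₂, refl l₂, delta_antitone l₃ l₁ σ hle hl₂⟩,
    fun l hl l' hle => acc_closed l' l hle hl⟩

/-- Domination of sets of ranked states: every state of `s` occurs in `t` with at most the same
rank. The first two clauses of `univLe` are instances of it. -/
def rankLe {Q : Type*} (s t : Set (Q × ℕ)) : Prop :=
  ∀ x ∈ s, ∃ n ≤ x.2, (x.1, n) ∈ t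

section

variable {Q A : Type*}

theorem rankLe.refl (s : Set (Q × ℕ)) : rankLe s s :=
  fun x hx => ⟨x.2, le_rfl, hx⟩

theorem univLe.refl (p : Set (Q × ℕ) × Set (Q × ℕ)) : univLe p p :=
  ⟨rankLe.refl p.1, rankLe.refl p.2, Iff.rfl⟩

theorem kvStep.of_rankLe {M : NBW Q A} {σ : A} {s t u : Set (Q × ℕ)}
    (htu : kvStep M σ t u) (hst : rankLe s t) : kvStep M σ s u := by
  intro p hp l' hl'
  obtain ⟨m, hmp, hmt⟩ := hst p hp
  obtain ⟨n, hnm, hnu⟩ := htu (p.1, m) hmt l' hl'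
  exact ⟨n, hnm.trans hmp, hnu⟩

theorem KVMH_delta_of_eq_empty (M : NBW Q A) (k : ℕ) (σ : A)
    {p : Set (Q × ℕ) × Set (Q × ℕ)} (hp : p.2 = ∅) :
    (KVMH M k).delta p σ =
      {q | ∃ s' ∈ Qk M k, q = (s', s' \ kvOdd Q k) ∧ kvStep M σ p.1 s'} :=
  if_pos hp

theorem KVMH_delta_of_ne_empty (M : NBW Q A) (k : ℕ) (σ : A)
    {p : Set (Q × ℕ) × Set (Q × ℕ)} (hp : p.2 ≠ ∅) :
    (KVMH M k).delta p σ =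
      {q | ∃ s' ∈ Qk M k, ∃ o', q = (s', o' \ kvOdd Q k) ∧ o' ⊆ s' ∧
        kvStep M σ p.1 s' ∧ kvStep M σ p.2 o'} :=
  if_neg hp

theorem KVMH_delta_subset_of_univLe (M : NBW Q A) (k : ℕ) (σ : A)
    {p q : Set (Q × ℕ) × Set (Q × ℕ)} (hpq : univLe p q) :
    (KVMH M k).delta q σ ⊆ (KVMH M k).delta p σ := by
  obtain ⟨hs, ho, hempty⟩ := hpq
  by_cases hq : q.2 = ∅
  · rw [KVMH_delta_of_eq_empty M k σ hq, KVMH_delta_of_eq_empty M k σ (hempty.mpr hq)]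
    rintro _ ⟨s', hs', rfl, hstep⟩
    exact ⟨s', hs', rfl, hstep.of_rankLe hs⟩
  · rw [KVMH_delta_of_ne_empty M k σ hq, KVMH_delta_of_ne_empty M k σ (mt hempty.mp hq)]
    rintro _ ⟨s', hs', o', rfl, hsub, hstep, hstep'⟩
    exact ⟨s', hs', o', rfl, hsub, hstep.of_rankLe hs, hstep'.of_rankLe ho⟩

theorem rClosed_univLe_KVMH_acc (M : NBW Q A) (k : ℕ) : RClosed univLe (KVMH M k).acc :=
  fun _ _ hpq hq => hpq.2.2.mpr hq

theorem univLe_simulation_general (M : NBW Q A) (k : ℕ) : (KVMH M k).Simulation univLe :=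
  .of_delta_antitone univLe.refl (fun _ _ σ hpq => KVMH_delta_subset_of_univLe M k σ hpq)
    (rClosed_univLe_KVMH_acc M k)

end

/-- For every NBW `A`, the pre-order `≼_univ` is a simulation for `KVMH(A)`. -/
theorem univLe_simulation {Q A : Type*} [Fintype Q] [Fintype A] (M : NBW Q A) :
    (KVMH M (2 * (Fintype.card Q - M.acc.ncard))).Simulation univLe :=
  univLe_simulation_general M _
end

section
/- Let B = ⟨L_B, ι_B, Σ, δ_B, {β₁, β₂}⟩ be a generalized Büchi automaton with finite state set. Then L(B) ≠ ∅ if and only if ι_B ∈ F'_B, where F'_B = ν y · ( μ x₁ · [Pre(x₁) ∪ (Pre(y) ∩ β₁)] ∩ μ x₂ · [Pre(x₂) ∪ (Pre(y) ∩ β₂)] ). -/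
/-- A generalized Büchi automaton with two accepting sets `β₁, β₂`. -/
structure GBA (Q : Type*) (A : Type*) where
  init : Q
  delta : Q → A → Set Q
  acc1 : Set Q
  acc2 : Set Q

namespace GBA

variable {Q A : Type*}

def IsRun (B : GBA Q A) (w : ℕ → A) (ρ : ℕ → Q) : Prop :=
  ρ 0 = B.init ∧ ∀ i, ρ (i + 1) ∈ B.delta (ρ i) (w i)

/-- Language: words with a run visiting both `β₁` and `β₂` infinitely often. -/
def Lang (B : GBA Q A) : Set (ℕ → A) :=
  {w | ∃ ρ, B.IsRun w ρ ∧ (∀ n, ∃ i ≥ n, ρ i ∈ B.acc1) ∧ (∀ n, ∃ i ≥ n, ρ i ∈ B.acc2)}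

def Pre (B : GBA Q A) (S : Set Q) : Set Q :=
  {l | ∃ σ, ∃ l' ∈ S, l' ∈ B.delta l σ}

def preHom (B : GBA Q A) : Set Q →o Set Q :=
  ⟨B.Pre, by rintro S T hST l ⟨σ, l', hl', hd⟩; exact ⟨σ, l', hST hl', hd⟩⟩

/-- `x ↦ Pre(x) ∪ (Pre(Y) ∩ β)`. -/
def innerHom (B : GBA Q A) (β : Set Q) (Y : Set Q) : Set Q →o Set Q :=
  ⟨fun X => B.Pre X ∪ (B.Pre Y ∩ β), by
    intro S T hST
    exact Set.union_subset_union_left _ ((preHom B).mono hST)⟩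

/-- `y ↦ μx₁·[Pre(x₁) ∪ (Pre(y) ∩ β₁)] ∩ μx₂·[Pre(x₂) ∪ (Pre(y) ∩ β₂)]`. -/
def outerHom (B : GBA Q A) : Set Q →o Set Q :=
  ⟨fun Y => OrderHom.lfp (B.innerHom B.acc1 Y) ∩ OrderHom.lfp (B.innerHom B.acc2 Y), by
    intro Y Y' hY
    apply Set.inter_subset_inter <;>
    · apply OrderHom.lfp.mono
      intro X
      exact Set.union_subset_union_right _
        (Set.inter_subset_inter_left _ ((preHom B).mono hY))⟩

/-- `F'_B = ν y · (μx₁·[Pre(x₁) ∪ (Pre(y) ∩ β₁)] ∩ μx₂·[Pre(x₂) ∪ (Pre(y) ∩ β₂)])`. -/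
def FixF (B : GBA Q A) : Set Q := OrderHom.gfp B.outerHom

end GBA

/-- The product of two Büchi automata, with generalized Büchi condition
`{β₁, β₂} = {α₁ × L₂, L₁ × α₂}`. -/
def NBW.prod {Q1 Q2 A : Type*} (M1 : NBW Q1 A) (M2 : NBW Q2 A) : GBA (Q1 × Q2) A where
  init := (M1.init, M2.init)
  delta := fun p σ => {q | q.1 ∈ M1.delta p.1 σ ∧ q.2 ∈ M2.delta p.2 σ}
  acc1 := {p | p.1 ∈ M1.acc}
  acc2 := {p | p.2 ∈ M2.acc}

open Filter Relation Set

section Recurrence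

variable {α ι : Type*} {r : α → α → Prop} {T : ι → Set α} {S : Set α}

/-- The values `f 0, …, f n` form a finite path of the relation `r`. A path with `n` steps is
encoded by a total function, whose values beyond `n` are irrelevant, so that a longer path extends
a shorter one when the two functions agree on `Set.Iic n`. -/
def IsPathUpTo (r : α → α → Prop) (f : ℕ → α) (n : ℕ) : Prop :=
  ∀ i < n, r (f i) (f (i + 1))

/-- A recurrent set for the relation `r` and the targets `T i`: from each of its points and for
each `i`, a finite path leads to a point of `T i` that has an `r`-successor in the set. These are
the sets within which all targets can be visited again and again. -/
def IsRecurrent (r : α → α → Prop) (T : ι → Set α) (S : Set α) : Prop :=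
  ∀ x ∈ S, ∀ i, ∃ y ∈ T i, ReflTransGen r x y ∧ ∃ z ∈ S, r y z

lemma IsPathUpTo.exists_extend_step {f : ℕ → α} {n : ℕ} (hf : IsPathUpTo r f n) {y : α}
    (hy : r (f n) y) : ∃ g, EqOn g f (Iic n) ∧ IsPathUpTo r g (n + 1) ∧ g (n + 1) = y := by
  have hg : EqOn (Function.update f (n + 1) y) f (Iic n) := fun i (hi : i ≤ n) =>
    Function.update_of_ne (by lia) y f
  refine ⟨Function.update f (n + 1) y, hg, fun i hi => ?_, Function.update_self ..⟩
  rcases (Nat.lt_succ_iff.mp hi).lt_or_eq with hin | rfl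
  · simpa only [hg hin.le, hg (Nat.succ_le_of_lt hin)] using hf i hin
  · simpa only [hg self_mem_Iic, Function.update_self] using hy

lemma IsPathUpTo.exists_extend {f : ℕ → α} {n : ℕ} (hf : IsPathUpTo r f n) {y : α}
    (hy : ReflTransGen r (f n) y) :
    ∃ g, ∃ m ≥ n, EqOn g f (Iic n) ∧ IsPathUpTo r g m ∧ g m = y := by
  induction hy with
  | refl => exact ⟨f, n, le_rfl, eqOn_refl f _, hf, rfl⟩
  | tail _ hyz ih =>
    obtain ⟨g, m, hnm, hgf, hg, rfl⟩ := ih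
    obtain ⟨h, hhg, hh, rfl⟩ := hg.exists_extend_step hyz
    exact ⟨h, m + 1, by lia, (hhg.mono (Iic_subset_Iic.mpr hnm)).trans hgf, hh, rfl⟩

lemma IsRecurrent.exists_extend (hS : IsRecurrent r T S) (i : ι) {f : ℕ → α} {n : ℕ}
    (hf : IsPathUpTo r f n) (hfn : f n ∈ S) :
    ∃ g, ∃ m > n, EqOn g f (Iic n) ∧ IsPathUpTo r g m ∧ g m ∈ S ∧ ∃ j ∈ Icc n m, g j ∈ T i := by
  obtain ⟨y, hyT, hy, z, hzS, hyz⟩ := hS _ hfn i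
  obtain ⟨g, j, hnj, hgf, hg, rfl⟩ := hf.exists_extend hy
  obtain ⟨h, hhg, hh, rfl⟩ := hg.exists_extend_step hyz
  exact ⟨h, j + 1, by lia, (hhg.mono (Iic_subset_Iic.mpr hnj)).trans hgf, hh, hzS,
    j, ⟨hnj, j.le_succ⟩, by rwa [hhg self_mem_Iic]⟩

lemma exists_eqOn_Iic_of_eqOn_succ {f : ℕ → ℕ → α} {n : ℕ → ℕ} (hn : StrictMono n)
    (hf : ∀ k, EqOn (f (k + 1)) (f k) (Iic (n k))) : ∃ g, ∀ k, EqOn g (f k) (Iic (n k)) := by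
  have heq : ∀ {k l}, k ≤ l → EqOn (f l) (f k) (Iic (n k)) := fun {k l} hkl => by
    induction l, hkl using Nat.le_induction with
    | base => exact eqOn_refl _ _
    | succ l hkl ih => exact ((hf l).mono (Iic_subset_Iic.mpr (hn.monotone hkl))).trans ih
  refine ⟨fun i => f i i, fun k i hi => ?_⟩
  rcases le_total k i with hki | hik
  · exact heq hki hi
  · exact (heq hik (hn.le_apply : i ≤ n i)).symm

lemma exists_seq_forall_frequently_eq (ι : Type*) [Countable ι] [Nonempty ι] :
    ∃ s : ℕ → ι, ∀ i, ∃ᶠ k in atTop, s k = i := by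
  obtain ⟨e, he⟩ := exists_surjective_nat ι
  refine ⟨fun k => e k.unpair.1, fun i => frequently_atTop.mpr fun N => ?_⟩
  obtain ⟨m, rfl⟩ := he i
  exact ⟨Nat.pair m N, Nat.right_le_pair m N, by simp only [Nat.unpair_pair]⟩

theorem IsRecurrent.exists_seq_frequently_mem [Countable ι] [Nonempty ι]
    (hS : IsRecurrent r T S) {a : α} (ha : a ∈ S) :
    ∃ f : ℕ → α, f 0 = a ∧ (∀ n, r (f n) (f (n + 1))) ∧ ∀ i, ∃ᶠ n in atTop, f n ∈ T i := by
  obtain ⟨s, hs⟩ := exists_seq_forall_frequently_eq ι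
  let Path := {p : (ℕ → α) × ℕ // IsPathUpTo r p.1 p.2 ∧ p.1 p.2 ∈ S}
  have hext : ∀ (i : ι) (p : Path), ∃ q : Path, p.1.2 < q.1.2 ∧
      EqOn q.1.1 p.1.1 (Iic p.1.2) ∧ ∃ j ∈ Icc p.1.2 q.1.2, q.1.1 j ∈ T i := fun i p => by
    obtain ⟨g, m, hm, hgp, hg, hgS, hT⟩ := hS.exists_extend i p.2.1 p.2.2
    exact ⟨⟨(g, m), hg, hgS⟩, hm, hgp, hT⟩
  choose extend hlt heq hvisit using hext
  let path : ℕ → Path :=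
    Nat.rec ⟨(fun _ => a, 0), fun i hi => absurd hi i.not_lt_zero, ha⟩ fun k => extend (s k)
  have hlen : StrictMono fun k => (path k).1.2 := strictMono_nat_of_lt_succ fun k =>
    hlt (s k) (path k)
  obtain ⟨f, hf⟩ := exists_eqOn_Iic_of_eqOn_succ (f := fun k => (path k).1.1) hlen
    fun k => heq (s k) (path k)
  refine ⟨f, hf 0 self_mem_Iic, fun n => ?_, fun i => frequently_atTop.mpr fun N => ?_⟩
  · have hn : n + 1 ≤ (path (n + 1)).1.2 := hlen.le_apply
    rw [hf (n + 1) (n.le_succ.trans hn), hf (n + 1) hn]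
    exact (path (n + 1)).2.1 n hn
  · obtain ⟨k, hNk, rfl⟩ := frequently_atTop.mp (hs i) N
    obtain ⟨j, ⟨hkj, hjk⟩, hj⟩ := hvisit (s k) (path k)
    have hk : k ≤ (path k).1.2 := hlen.le_apply
    exact ⟨j, hNk.trans (hk.trans hkj), by rwa [hf (k + 1) hjk]⟩

theorem isRecurrent_range {f : ℕ → α} (hf : ∀ n, r (f n) (f (n + 1)))
    (hT : ∀ i, ∃ᶠ n in atTop, f n ∈ T i) : IsRecurrent r T (range f) := by
  rintro _ ⟨n, rfl⟩ i
  obtain ⟨m, hnm, hm⟩ := frequently_atTop.mp (hT i) n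
  exact ⟨f m, hm, Nat.rel_of_forall_rel_succ_of_le _ (fun k => .single (hf k)) hnm,
    f (m + 1), mem_range_self _, hf m⟩

end Recurrence

namespace GBA

variable {Q A : Type*} (B : GBA Q A)

/-- The edge relation of the transition graph of `B`, in which the letters are forgotten. -/
def Step (q q' : Q) : Prop := ∃ σ, q' ∈ B.delta q σ

/-- The accepting sets `β₁` and `β₂` as a family, so that they can serve as the targets of
recurrent sets; `β₁` has index `0` and `β₂` index `1`. -/
def acc : Fin 2 → Set Q := ![B.acc1, B.acc2]

lemma mem_pre_iff {S : Set Q} {q : Q} : q ∈ B.Pre S ↔ ∃ q' ∈ S, B.Step q q' :=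
  ⟨fun ⟨σ, q', hq', hd⟩ => ⟨q', hq', σ, hd⟩, fun ⟨q', hq', σ, hd⟩ => ⟨σ, q', hq', hd⟩⟩

lemma lang_nonempty_iff_exists_seq :
    B.Lang.Nonempty ↔ ∃ ρ : ℕ → Q, ρ 0 = B.init ∧ (∀ n, B.Step (ρ n) (ρ (n + 1))) ∧
      ∀ i, ∃ᶠ n in atTop, ρ n ∈ B.acc i := by
  simp only [Fin.forall_fin_two, frequently_atTop]
  constructor
  · rintro ⟨w, ρ, ⟨h0, hstep⟩, hacc⟩
    exact ⟨ρ, h0, fun n => ⟨w n, hstep n⟩, hacc⟩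
  · rintro ⟨ρ, h0, hstep, hacc⟩
    choose w hw using hstep
    exact ⟨w, ρ, ⟨h0, hw⟩, hacc⟩

lemma mem_lfp_innerHom_iff {β Y : Set Q} {q : Q} :
    q ∈ (B.innerHom β Y).lfp ↔ ∃ q' ∈ β, ReflTransGen B.Step q q' ∧ ∃ p ∈ Y, B.Step q' p := by
  constructor
  · suffices (B.innerHom β Y).lfp ≤
        {q | ∃ q' ∈ β, ReflTransGen B.Step q q' ∧ ∃ p ∈ Y, B.Step q' p} from fun hq => this hq
    refine OrderHom.lfp_le _ ?_
    rintro l (hl | ⟨hl, hlβ⟩)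
    · obtain ⟨l', ⟨q', hq', hreach, hp⟩, hstep⟩ := B.mem_pre_iff.mp hl
      exact ⟨q', hq', .head hstep hreach, hp⟩
    · exact ⟨l, hlβ, .refl, B.mem_pre_iff.mp hl⟩
  · rintro ⟨q', hq', hreach, hp⟩
    induction hreach using ReflTransGen.head_induction_on with
    | refl =>
      rw [← OrderHom.map_lfp]
      exact Or.inr ⟨B.mem_pre_iff.mpr hp, hq'⟩
    | head hstep _ ih =>
      rw [← OrderHom.map_lfp]
      exact Or.inl (B.mem_pre_iff.mpr ⟨_, ih, hstep⟩)

lemma mem_outerHom_iff {S : Set Q} {q : Q} :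
    q ∈ B.outerHom S ↔ ∀ i, q ∈ (B.innerHom (B.acc i) S).lfp := by
  rw [Fin.forall_fin_two]
  rfl

lemma le_outerHom_iff_isRecurrent {S : Set Q} :
    S ≤ B.outerHom S ↔ IsRecurrent B.Step B.acc S :=
  forall₂_congr fun _ _ =>
    B.mem_outerHom_iff.trans (forall_congr' fun _ => B.mem_lfp_innerHom_iff)

lemma mem_fixF_iff_exists_isRecurrent {q : Q} :
    q ∈ B.FixF ↔ ∃ S, IsRecurrent B.Step B.acc S ∧ q ∈ S := by
  simp only [← le_outerHom_iff_isRecurrent]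
  exact mem_sUnion

end GBA

theorem gba_nonempty_iff_fix_general {Q A : Type*} (B : GBA Q A) :
    B.Lang ≠ ∅ ↔ B.init ∈ B.FixF := by
  rw [← nonempty_iff_ne_empty, B.lang_nonempty_iff_exists_seq, B.mem_fixF_iff_exists_isRecurrent]
  constructor
  · rintro ⟨ρ, h0, hstep, hacc⟩
    exact ⟨range ρ, isRecurrent_range hstep hacc, 0, h0⟩
  · rintro ⟨S, hS, hinit⟩
    exact hS.exists_seq_frequently_mem hinit

/-- `L(B) ≠ ∅` iff `ι_B ∈ F'_B` for a generalized Büchi automaton `B`. -/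
theorem gba_nonempty_iff_fix {Q A : Type*} [Fintype Q] [Fintype A] (B : GBA Q A) :
    B.Lang ≠ ∅ ↔ B.init ∈ B.FixF :=
  gba_nonempty_iff_fix_general B
end
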